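/- Let m ≥ 2 be an integer and B_1, B_2 > 1 real numbers. Let t = t_{B_1}^{(m)} and assume 1/2 < t < 1, and set θ_m = (t^m − t·(1−t)^{m−1})/(t^m − (1−t)^m). Let 𝓕^m_{B_1,B_2} = { x ∈ (0,1) irrational : a_n(x)·a_{n+1}(x)⋯a_{n+m−1}(x) ≥ B_1^n for infinitely many n ∈ ℕ, and a_{n+1}(x)·a_{n+2}(x)⋯a_{n+m−1}(x) < B_2^n for all sufficiently large n ∈ ℕ }. If B_1^{θ_m} ≤ B_2, then dim_H 𝓕^m_{B_1,B_2} = t. -/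

import Mathlib

open Filter MeasureTheory Set

/-- The Gauss map `T(x) = 1/x - ⌊1/x⌋`. -/
noncomputable def gaussMap (x : ℝ) : ℝ := 1 / x - (⌊1 / x⌋ : ℤ)

/-- The `n`-th partial quotient `a_n(x)` (for `n ≥ 1`) of the continued
fraction expansion of `x`: `a_n(x) = ⌊1 / T^{n-1}(x)⌋`. -/
noncomputable def pq (x : ℝ) (n : ℕ) : ℕ := ⌊1 / (gaussMap^[n - 1] x)⌋₊

/-- The continuant `q_n(a_1, …, a_n)`: `q_0 = 1`, `q_1 = a_1`,
`q_k = a_k q_{k-1} + q_{k-2}`. -/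
def contQ : (n : ℕ) → (Fin n → ℕ) → ℕ
  | 0, _ => 1
  | 1, a => a 0
  | (n + 2), a =>
      a (Fin.last (n + 1)) * contQ (n + 1) (Fin.init a) +
        contQ n (Fin.init (Fin.init a))

/-- `s_B`: the Wang–Wu pressure exponent. -/
noncomputable def sExp (B : ℝ) : ℝ :=
  sInf {s : ℝ | 0 ≤ s ∧
    Filter.atTop.limsup (fun n : ℕ =>
      (((n : ℝ)⁻¹ : ℝ) : EReal) * ENNReal.log (∑' a : Fin n → ℕ+,
        ENNReal.ofReal ((B ^ n * ((contQ n fun i => (a i : ℕ)) : ℝ) ^ 2) ^ (-s)))) ≤ 0}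

/-- `g_{B₁,B₂}`: the two-parameter pressure exponent. -/
noncomputable def gExp (B₁ B₂ : ℝ) : ℝ :=
  sInf {s : ℝ | 0 ≤ s ∧
    Filter.atTop.limsup (fun n : ℕ =>
      (((n : ℝ)⁻¹ : ℝ) : EReal) * ENNReal.log (∑' a : Fin n → ℕ+,
        ENNReal.ofReal (B₂ ^ ((1 - s) * (n : ℝ)) *
          (B₁ ^ n * ((contQ n fun i => (a i : ℕ)) : ℝ) ^ 2) ^ (-s)))) ≤ 0}

/-- The iterates `f_1(s) = s`, `f_{k+1}(s) = s f_k(s) / (1 - s + f_k(s))`;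
here `fIter s k = f_{k+1}(s)`, so `f_m(s) = fIter s (m - 1)`. -/
noncomputable def fIter (s : ℝ) : ℕ → ℝ
  | 0 => s
  | (k + 1) => s * fIter s k / (1 - s + fIter s k)

/-- `t_B^{(m)}`: the Huang–Wu–Xu pressure exponent. -/
noncomputable def tExpM (B : ℝ) (m : ℕ) : ℝ :=
  sInf {s : ℝ | 0 ≤ s ∧ s ≤ 1 ∧
    Filter.atTop.limsup (fun n : ℕ =>
      (((n : ℝ)⁻¹ : ℝ) : EReal) * ENNReal.log (∑' a : Fin n → ℕ+,
        ENNReal.ofReal (B ^ (-(n : ℝ) * fIter s (m - 1)) *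
          ((contQ n fun i => (a i : ℕ)) : ℝ) ^ (-(2 * s))))) ≤ 0}

section Helpers

namespace NAC

/-- Pairs of consecutive continuants along a digit sequence. -/
def qs : ℕ → (ℕ → ℕ) → ℕ × ℕ
  | 0, _ => (1, 0)
  | (n + 1), a => (a n * (qs n a).1 + (qs n a).2, (qs n a).1)

/-- The continuant `q_n` of the first `n` digits. -/
def Q (n : ℕ) (a : ℕ → ℕ) : ℕ := (qs n a).1

/-- The previous continuant `q_{n-1}`. -/
def Q' (n : ℕ) (a : ℕ → ℕ) : ℕ := (qs n a).2

lemma Q_zero (a : ℕ → ℕ) : Q 0 a = 1 := rfl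
lemma Q'_zero (a : ℕ → ℕ) : Q' 0 a = 0 := rfl
lemma Q_succ (n : ℕ) (a : ℕ → ℕ) : Q (n + 1) a = a n * Q n a + Q' n a := rfl
lemma Q'_succ (n : ℕ) (a : ℕ → ℕ) : Q' (n + 1) a = Q n a := rfl

lemma qs_congr {n : ℕ} {a b : ℕ → ℕ} (h : ∀ i < n, a i = b i) : qs n a = qs n b := by
  induction n with
  | zero => rfl
  | succ n ih =>
    have := ih (fun i hi => h i (by omega))
    simp only [qs, this, h n (by omega)]

lemma Q_congr {n : ℕ} {a b : ℕ → ℕ} (h : ∀ i < n, a i = b i) : Q n a = Q n b := by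
  unfold Q; rw [qs_congr h]

lemma contQ_eq_Q : ∀ (n : ℕ) (a : ℕ → ℕ), contQ n (fun i => a i) = Q n a
  | 0, a => rfl
  | 1, a => by simp [contQ, Q, qs]
  | (n + 2), a => by
    have h1 := contQ_eq_Q (n + 1) a
    have h2 := contQ_eq_Q n a
    rw [Q_succ, Q'_succ, ← h1, ← h2]
    rfl

/-- All digits positive. -/
def Pos (a : ℕ → ℕ) : Prop := ∀ i, 1 ≤ a i

lemma Q_pos {a : ℕ → ℕ} (ha : Pos a) (n : ℕ) : 1 ≤ Q n a := by
  induction n with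
  | zero => simp [Q_zero]
  | succ n ih => rw [Q_succ]; nlinarith [ha n]

lemma Q'_le_Q {a : ℕ → ℕ} (ha : Pos a) (n : ℕ) : Q' n a ≤ Q n a := by
  cases n with
  | zero => simp [Q_zero, Q'_zero]
  | succ n => rw [Q_succ, Q'_succ]; nlinarith [ha n, Q_pos ha n]

lemma Q_le_succ {a : ℕ → ℕ} (ha : Pos a) (n : ℕ) : Q n a ≤ Q (n + 1) a := by
  have := Q'_le_Q ha (n + 1)
  rwa [Q'_succ] at this

lemma Q_add_le_two {a : ℕ → ℕ} (ha : Pos a) (n k : ℕ) :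
    Q (n + k) a ≤ 2 * Q n a * Q k (fun i => a (n + i)) ∧
    Q (n + k + 1) a ≤ 2 * Q n a * Q (k + 1) (fun i => a (n + i)) := by
  induction k with
  | zero =>
    have h1 := Q'_le_Q ha n
    have h2 := ha n
    have h3 := Q_pos ha n
    constructor
    · simp only [Q_zero, add_zero]; omega
    · simp only [add_zero, Q_succ, Q'_zero, zero_add, Q_zero, mul_one]
      nlinarith
  | succ k ih =>
    refine ⟨ih.2, ?_⟩
    have e1 : Q (n + (k + 1) + 1) a = a (n + (k + 1)) * Q (n + k + 1) a + Q (n + k) a := by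
      rw [Q_succ]; rfl
    have e2 : Q (k + 1 + 1) (fun i => a (n + i)) =
      a (n + (k + 1)) * Q (k + 1) (fun i => a (n + i)) + Q k (fun i => a (n + i)) := by
      rw [Q_succ]; rfl
    rw [e1, e2]
    nlinarith [ih.1, ih.2, Nat.mul_le_mul_left (a (n + (k + 1))) ih.2]

lemma Q_mul_prod_le (a : ℕ → ℕ) (n k : ℕ) :
    Q n a * ∏ i ∈ Finset.range k, a (n + i) ≤ Q (n + k) a := by
  induction k with
  | zero => simp
  | succ k ih =>
    rw [Finset.prod_range_succ, ← add_assoc, Q_succ]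
    nlinarith [Nat.mul_le_mul_left (a (n + k)) ih, Nat.zero_le (Q' (n + k) a)]

lemma Q_le_mul_prod {a : ℕ → ℕ} (ha : Pos a) (n k : ℕ) :
    Q (n + k) a ≤ Q n a * ∏ i ∈ Finset.range k, (a (n + i) + 1) := by
  induction k with
  | zero => simp
  | succ k ih =>
    rw [Finset.prod_range_succ, ← add_assoc, Q_succ]
    nlinarith [Nat.mul_le_mul_left (a (n + k) + 1) ih, Q'_le_Q ha (n + k)]

lemma two_pow_le_Q {a : ℕ → ℕ} (ha : Pos a) (n : ℕ) :
    2 ^ n ≤ 2 * Q n a ^ 2 ∧ 2 ^ (n + 1) ≤ 2 * Q (n + 1) a ^ 2 := by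
  induction n with
  | zero =>
    refine ⟨by simp [Q_zero], ?_⟩
    have := Q_pos ha 1
    simp only [zero_add, pow_one]; nlinarith
  | succ n ih =>
    refine ⟨ih.2, ?_⟩
    have e : Q (n + 1 + 1) a = a (n + 1) * Q (n + 1) a + Q n a := by rw [Q_succ]; rfl
    have h1 := Q_le_succ ha n
    have h2 : 2 * Q n a ≤ Q (n + 1 + 1) a := by rw [e]; nlinarith [ha (n + 1)]
    calc 2 ^ (n + 1 + 1) = 4 * 2 ^ n := by ring
      _ ≤ 4 * (2 * Q n a ^ 2) := by gcongr; exact ih.1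
      _ = 2 * (2 * Q n a) ^ 2 := by ring
      _ ≤ _ := by gcongr

/-- Value of the continued fraction with first `n` digits of `a` and tail `z`. -/
noncomputable def cf : ℕ → (ℕ → ℕ) → ℝ → ℝ
  | 0, _, z => z
  | (n + 1), a, z => cf n a (1 / (a n + z))

lemma cf_congr {n : ℕ} {a b : ℕ → ℕ} (h : ∀ i < n, a i = b i) (z : ℝ) : cf n a z = cf n b z := by
  induction n generalizing z with
  | zero => rfl
  | succ n ih => simp only [cf, h n (by omega)]; exact ih (fun i hi => h i (by omega)) _

lemma cf_sub {a : ℕ → ℕ} (ha : Pos a) (n : ℕ) {z w : ℝ} (hz : 0 ≤ z) (hw : 0 ≤ w) :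
    |cf n a z - cf n a w| = |z - w| / ((Q n a + Q' n a * z) * (Q n a + Q' n a * w)) := by
  induction n generalizing z w with
  | zero => simp [cf, Q_zero, Q'_zero]
  | succ n ih =>
    have h1 : (1 : ℝ) ≤ a n := by exact_mod_cast ha n
    have h2 : (1 : ℝ) ≤ Q n a := by exact_mod_cast Q_pos ha n
    have h3 : (0 : ℝ) ≤ Q' n a := by positivity
    have hz' : 0 < (a n : ℝ) + z := by linarith
    have hw' : 0 < (a n : ℝ) + w := by linarith
    rw [cf, cf, ih (by positivity) (by positivity)]
    have e : (1 / ((a n : ℝ) + z) - 1 / (a n + w)) = -(z - w) / ((a n + z) * (a n + w)) := by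
      field_simp; ring
    rw [e, abs_div, abs_neg, abs_of_pos (mul_pos hz' hw'), div_div, Q_succ, Q'_succ]
    congr 1
    push_cast
    field_simp
    ring

lemma cf_sub_le {a : ℕ → ℕ} (ha : Pos a) (n : ℕ) {z w : ℝ} (hz : 0 ≤ z) (hw : 0 ≤ w) :
    |cf n a z - cf n a w| ≤ |z - w| / (Q n a : ℝ) ^ 2 := by
  rw [cf_sub ha n hz hw]
  have h2 : (1 : ℝ) ≤ Q n a := by exact_mod_cast Q_pos ha n
  have h3 : (0 : ℝ) ≤ Q' n a := by positivity
  rw [pow_two]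
  gcongr <;> nlinarith

lemma le_cf_sub {a : ℕ → ℕ} (ha : Pos a) (n : ℕ) {z w : ℝ} (hz : 0 ≤ z) (hw : 0 ≤ w)
    (hz1 : z ≤ 1) (hw1 : w ≤ 1) :
    |z - w| / (4 * (Q n a : ℝ) ^ 2) ≤ |cf n a z - cf n a w| := by
  rw [cf_sub ha n hz hw]
  have h2 : (1 : ℝ) ≤ Q n a := by exact_mod_cast Q_pos ha n
  have h3 : (0 : ℝ) ≤ Q' n a := by positivity
  have h4 : (Q' n a : ℝ) ≤ Q n a := by exact_mod_cast Q'_le_Q ha n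
  have h5 : (4 * (Q n a : ℝ) ^ 2) = (2 * Q n a) * (2 * Q n a) := by ring
  rw [h5]
  gcongr <;> nlinarith

lemma cf_mem {a : ℕ → ℕ} (ha : Pos a) (n : ℕ) {z : ℝ} (hz : 0 ≤ z) (hz1 : z ≤ 1) :
    0 ≤ cf n a z ∧ cf n a z ≤ 1 := by
  induction n generalizing z with
  | zero => exact ⟨hz, hz1⟩
  | succ n ih =>
    have h1 : (1 : ℝ) ≤ a n := by exact_mod_cast ha n
    apply ih
    · positivity
    · rw [div_le_one (by linarith)]; linarith

lemma cf_succ' (n : ℕ) (a : ℕ → ℕ) (z : ℝ) :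
    cf (n + 1) a z = 1 / (a 0 + cf n (fun i => a (i + 1)) z) := by
  induction n generalizing z with
  | zero => rfl
  | succ n ih => rw [cf, ih]; rfl

/-- The value of an infinite continued fraction. -/
noncomputable def cfv (a : ℕ → ℕ) : ℝ := limsup (fun n => cf n a 0) atTop

lemma measurable_cf (n : ℕ) : Measurable (fun p : (ℕ → ℕ) × ℝ => cf n p.1 p.2) := by
  induction n with
  | zero => exact measurable_snd
  | succ n ih =>
    have h : Measurable (fun p : (ℕ → ℕ) × ℝ => (p.1, 1 / ((p.1 n : ℝ) + p.2))) := by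
      refine measurable_fst.prodMk ?_
      refine measurable_const.div (Measurable.add ?_ measurable_snd)
      exact (measurable_from_top (f := fun k : ℕ => (k : ℝ))).comp
        ((measurable_pi_apply n).comp measurable_fst)
    exact ih.comp h

lemma measurable_cfv : Measurable cfv := by
  refine Measurable.limsup (fun n => ?_)
  exact (measurable_cf n).comp (measurable_id.prodMk measurable_const)

lemma cf_add (n k : ℕ) (a : ℕ → ℕ) (z : ℝ) :
    cf (n + k) a z = cf n a (cf k (fun i => a (n + i)) z) := by
  induction k generalizing z with
  | zero => rfl
  | succ k ih => rw [← add_assoc, cf, ih]; rfl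

lemma tendsto_cfv {a : ℕ → ℕ} (ha : Pos a) : Tendsto (fun n => cf n a 0) atTop (nhds (cfv a)) := by
  have hc : CauchySeq (fun n => cf n a 0) := by
    refine cauchySeq_of_le_geometric_two (C := 4) (fun n => ?_)
    rw [Real.dist_eq, cf]
    have h1 : (1 : ℝ) ≤ a n := by exact_mod_cast ha n
    have h2 : (1 : ℝ) ≤ Q n a := by exact_mod_cast Q_pos ha n
    have h3 : (2 : ℝ) ^ n ≤ 2 * (Q n a : ℝ) ^ 2 := by exact_mod_cast (two_pow_le_Q ha n).1
    refine (cf_sub_le ha n le_rfl (by positivity)).trans ?_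
    have h4 : |0 - 1 / ((a n : ℝ) + 0)| ≤ 1 := by
      rw [zero_sub, abs_neg, abs_of_nonneg (by positivity), add_zero, div_le_one (by linarith)]
      exact h1
    have h5 : |0 - 1 / ((a n : ℝ) + 0)| / (Q n a : ℝ) ^ 2 ≤ 1 / (Q n a : ℝ) ^ 2 := by gcongr
    refine h5.trans ?_
    rw [div_le_div_iff₀ (by positivity) (by positivity)]
    linarith
  obtain ⟨x, hx⟩ := cauchySeq_tendsto_of_complete hc
  have : cfv a = x := hx.limsup_eq
  rwa [this]

lemma cfv_nonneg {a : ℕ → ℕ} (ha : Pos a) : 0 ≤ cfv a ∧ cfv a ≤ 1 :=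
  ⟨ge_of_tendsto' (tendsto_cfv ha) fun n => (cf_mem ha n le_rfl zero_le_one).1,
    le_of_tendsto' (tendsto_cfv ha) fun n => (cf_mem ha n le_rfl zero_le_one).2⟩

lemma Pos.shift {a : ℕ → ℕ} (ha : Pos a) (n : ℕ) : Pos (fun i => a (i + n)) := fun i => ha _

lemma cfv_eq {a : ℕ → ℕ} (ha : Pos a) : cfv a = 1 / (a 0 + cfv (fun i => a (i + 1))) := by
  have h1 := (tendsto_add_atTop_iff_nat 1).2 (tendsto_cfv ha)
  have h2 := tendsto_cfv (ha.shift 1)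
  have h3 : (1 : ℝ) ≤ a 0 := by exact_mod_cast ha 0
  have h4 := cfv_nonneg (ha.shift 1)
  refine tendsto_nhds_unique h1 ?_
  simp only [cf_succ']
  exact Tendsto.div tendsto_const_nhds (tendsto_const_nhds.add h2) (by linarith)

lemma cfv_pos {a : ℕ → ℕ} (ha : Pos a) : 0 < cfv a := by
  rw [cfv_eq ha]
  have h3 : (1 : ℝ) ≤ a 0 := by exact_mod_cast ha 0
  have h4 := (cfv_nonneg (ha.shift 1)).1
  positivity

lemma cfv_lt_one {a : ℕ → ℕ} (ha : Pos a) : cfv a < 1 := by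
  rw [cfv_eq ha]
  have h3 : (1 : ℝ) ≤ a 0 := by exact_mod_cast ha 0
  have h4 := cfv_pos (ha.shift 1)
  rw [div_lt_one (by linarith)]; linarith

lemma one_div_cfv {a : ℕ → ℕ} (ha : Pos a) : 1 / cfv a = a 0 + cfv (fun i => a (i + 1)) := by
  rw [cfv_eq ha, one_div_one_div]

lemma gaussMap_cfv {a : ℕ → ℕ} (ha : Pos a) : gaussMap (cfv a) = cfv (fun i => a (i + 1)) := by
  have h4 := cfv_pos (ha.shift 1)
  have h5 := cfv_lt_one (ha.shift 1)
  rw [gaussMap, one_div_cfv ha]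
  have : ⌊(a 0 : ℝ) + cfv (fun i => a (i + 1))⌋ = a 0 := by
    rw [Int.floor_eq_iff]; push_cast; constructor <;> linarith
  rw [this]; push_cast; ring

lemma gaussMap_iter_cfv {a : ℕ → ℕ} (ha : Pos a) (n : ℕ) :
    gaussMap^[n] (cfv a) = cfv (fun i => a (i + n)) := by
  induction n with
  | zero => rfl
  | succ n ih =>
    rw [Function.iterate_succ_apply', ih, gaussMap_cfv (ha.shift n)]
    congr 1; funext i; congr 1; ring

lemma pq_cfv {a : ℕ → ℕ} (ha : Pos a) (n : ℕ) : pq (cfv a) (n + 1) = a n := by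
  have h4 := cfv_pos ((ha.shift n).shift 1)
  have h5 := cfv_lt_one ((ha.shift n).shift 1)
  rw [pq, Nat.add_sub_cancel, gaussMap_iter_cfv ha, one_div_cfv (ha.shift n), zero_add]
  rw [Nat.floor_eq_iff (by positivity)]
  constructor <;> linarith

lemma cfv_ne_rat : ∀ (q : ℕ) (p : ℕ) (a : ℕ → ℕ), Pos a → cfv a * q = p → q = 0 := by
  intro q
  induction q using Nat.strong_induction_on with
  | _ q ih =>
    intro p a ha h
    by_contra hq
    have hq' : (0 : ℝ) < q := by positivity
    have h1 := cfv_pos ha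
    have h2 := cfv_lt_one ha
    have hp : (0 : ℝ) < p := by rw [← h]; positivity
    have hpq : (p : ℝ) < q := by rw [← h]; nlinarith
    have h3 := one_div_cfv ha
    have h4 : cfv (fun i => a (i + 1)) * p = q - a 0 * p := by
      have : cfv (fun i => a (i + 1)) = 1 / cfv a - a 0 := by linarith
      rw [this, ← h]; field_simp
    have h5 := cfv_pos (ha.shift 1)
    have h6 : (a 0 * p : ℝ) < q := by nlinarith [mul_pos h5 hp]
    have h7 : a 0 * p ≤ q := by exact_mod_cast h6.le
    have := ih p (by exact_mod_cast hpq) (q - a 0 * p) _ (ha.shift 1) (by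
      rw [h4]; push_cast [Nat.cast_sub h7]; ring)
    rw [this] at hp; simp at hp

lemma irrational_cfv {a : ℕ → ℕ} (ha : Pos a) : Irrational (cfv a) := by
  rintro ⟨r, hr⟩
  have h1 := cfv_pos ha
  rw [← hr] at h1
  have h0 : 0 < r := by exact_mod_cast h1
  have hn : 0 < r.num := Rat.num_pos.2 h0
  have hd := r.den_ne_zero
  refine hd (cfv_ne_rat r.den r.num.toNat a ha ?_)
  rw [← hr]
  have e : ((r.num.toNat : ℕ) : ℝ) = ((r.num : ℤ) : ℝ) := by
    rw [← Int.cast_natCast, Int.toNat_of_nonneg hn.le]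
  rw [e]
  exact_mod_cast Rat.mul_den_eq_num r

lemma cfv_eq_cf {a : ℕ → ℕ} (ha : Pos a) (n : ℕ) : cfv a = cf n a (cfv (fun i => a (i + n))) := by
  induction n with
  | zero => rfl
  | succ n ih =>
    rw [cf, ih, cfv_eq (ha.shift n)]
    congr 4
    · simp
    · funext i; congr 1; ring

/-- Separation of two continued fractions that first disagree at digit `n`. -/
lemma gap {a b : ℕ → ℕ} (ha : Pos a) (hb : Pos b) (n : ℕ) (hab : ∀ i < n, a i = b i)
    (hlt : a n < b n) (M : ℕ) (hM : 1 ≤ M) (hnext : 2 ≤ a (n + 1) ∨ b (n + 1) ≤ M) :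
    ((b n : ℝ) - a n) / (16 * (M + 1) * (Q n a : ℝ) ^ 2 * (a n * b n)) ≤ |cfv a - cfv b| := by
  rw [cfv_eq_cf ha n, cfv_eq_cf hb n, cf_congr hab]
  rw [Q_congr hab]
  set u := cfv (fun i => a (i + 1 + n)) with hu
  set v := cfv (fun i => b (i + 1 + n)) with hv
  have hA : cfv (fun i => a (i + n)) = 1 / (a n + u) := by rw [cfv_eq (ha.shift n)]; simp [hu]
  have hB : cfv (fun i => b (i + n)) = 1 / (b n + v) := by rw [cfv_eq (hb.shift n)]; simp [hv]
  have hposA : Pos (fun i => a (i + 1 + n)) := fun i => ha _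
  have hposB : Pos (fun i => b (i + 1 + n)) := fun i => hb _
  have hu0 : 0 < u := cfv_pos hposA
  have hu1 : u < 1 := cfv_lt_one hposA
  have hv0 : 0 < v := cfv_pos hposB
  have hv1 : v < 1 := cfv_lt_one hposB
  have ha1 : (1 : ℝ) ≤ a n := by exact_mod_cast ha n
  have hb1 : (a n : ℝ) + 1 ≤ b n := by exact_mod_cast hlt
  have hM1 : (1 : ℝ) ≤ M := by exact_mod_cast hM
  have hc : 1 / ((M : ℝ) + 1) ≤ 1 - u + v := by
    rcases hnext with h | h
    · have h1 : 2 * u ≤ 1 := by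
        have e := one_div_cfv hposA
        rw [← hu] at e
        have h2 : (2 : ℝ) ≤ a (n + 1) := by exact_mod_cast h
        have h3 := cfv_pos (hposA.shift 1)
        have e2 : (a (0 + 1 + n) : ℝ) = a (n + 1) := by congr 2; ring
        rw [e2] at e
        have : 2 ≤ 1 / u := by linarith
        rwa [le_div_iff₀ hu0] at this
      have : 1 / ((M : ℝ) + 1) ≤ 1 / 2 := by gcongr; linarith
      linarith
    · have e := one_div_cfv hposB
      rw [← hv] at e
      have h2 : (b (n + 1) : ℝ) ≤ M := by exact_mod_cast h
      have h3 := cfv_lt_one (hposB.shift 1)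
      have e2 : (b (0 + 1 + n) : ℝ) = b (n + 1) := by congr 2; ring
      rw [e2] at e
      have : 1 / v ≤ M + 1 := by linarith
      rw [div_le_iff₀ hv0] at this
      have : 1 / ((M : ℝ) + 1) ≤ v := by
        rw [div_le_iff₀ (by linarith)]; linarith
      linarith
  have hc0 : 0 < 1 / ((M : ℝ) + 1) := by positivity
  have hc1 : 1 / ((M : ℝ) + 1) ≤ 1 := by rw [div_le_one (by linarith)]; linarith
  set c := 1 / ((M : ℝ) + 1) with hcdef
  rw [hA, hB]
  refine le_trans ?_ (le_cf_sub hb n (by positivity) (by positivity) ?_ ?_)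
  · have e : 1 / ((a n : ℝ) + u) - 1 / (b n + v) = (b n - a n + (v - u)) / ((a n + u) * (b n + v)) := by
      have : (0:ℝ) < b n := by linarith
      field_simp; ring
    have hbpos : (0:ℝ) < b n := by linarith
    have hnum : c * (b n - a n) ≤ b n - a n + (v - u) := by nlinarith
    have hnum0 : 0 ≤ c * ((b n : ℝ) - a n) := mul_nonneg hc0.le (by linarith)
    rw [e, abs_of_nonneg (div_nonneg (by linarith) (by positivity)), div_div]
    have e3 : ((b n : ℝ) - a n) / (16 * (M + 1) * (Q n b : ℝ) ^ 2 * (a n * b n)) =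
       (c * (b n - a n)) / ((2 * a n) * (2 * b n) * (4 * (Q n b : ℝ) ^ 2)) := by
      rw [hcdef]
      have h2 : (1 : ℝ) ≤ Q n b := by exact_mod_cast Q_pos hb n
      field_simp; ring
    rw [e3]
    have h2 : (1 : ℝ) ≤ Q n b := by exact_mod_cast Q_pos hb n
    gcongr
    · linarith
    · linarith
    · linarith
  · rw [div_le_one (by linarith)]; linarith
  · rw [div_le_one (by linarith)]; linarith

/-- Every irrational in the unit interval is the value of its expansion. -/
lemma gauss_props {x : ℝ} (hx : x ∈ Ioo (0:ℝ) 1) (hi : Irrational x) :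
    gaussMap x ∈ Ioo (0:ℝ) 1 ∧ Irrational (gaussMap x) ∧ 1 ≤ ⌊1 / x⌋₊ ∧
    x = 1 / ((⌊1 / x⌋₊ : ℝ) + gaussMap x) := by
  have hx0 := hx.1
  have hirr : Irrational (gaussMap x) := by
    unfold gaussMap
    rw [one_div]
    exact (irrational_inv_iff.2 hi).sub_intCast _
  have hfl : (⌊1 / x⌋₊ : ℝ) = ((⌊1 / x⌋ : ℤ) : ℝ) := by
    rw [← Int.cast_natCast, Int.natCast_floor_eq_floor (by positivity)]
  have h1 : 1 < 1 / x := by rw [lt_div_iff₀ hx0]; linarith [hx.2]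
  refine ⟨⟨lt_of_le_of_ne ?_ ?_, ?_⟩, hirr, ?_, ?_⟩
  · exact sub_nonneg.2 (Int.floor_le _)
  · exact fun h => hirr.ne_zero h.symm
  · unfold gaussMap; linarith [Int.lt_floor_add_one (1 / x)]
  · exact Nat.le_floor (by simpa using h1.le)
  · rw [hfl, gaussMap]; simp

lemma gauss_iter_props {x : ℝ} (hx : x ∈ Ioo (0:ℝ) 1) (hi : Irrational x) (n : ℕ) :
    gaussMap^[n] x ∈ Ioo (0:ℝ) 1 ∧ Irrational (gaussMap^[n] x) ∧
    x = cf n (fun i => pq x (i + 1)) (gaussMap^[n] x) := by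
  induction n with
  | zero => exact ⟨hx, hi, rfl⟩
  | succ n ih =>
    have := gauss_props ih.1 ih.2.1
    rw [Function.iterate_succ_apply']
    refine ⟨this.1, this.2.1, ?_⟩
    rw [cf]
    have e : pq x (n + 1) = ⌊1 / gaussMap^[n] x⌋₊ := rfl
    rw [e, ← this.2.2.2]
    exact ih.2.2

lemma pq_pos {x : ℝ} (hx : x ∈ Ioo (0:ℝ) 1) (hi : Irrational x) : Pos (fun i => pq x (i + 1)) := by
  intro n
  have h := gauss_iter_props hx hi n
  exact (gauss_props h.1 h.2.1).2.2.1

end NAC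

namespace NAC

/-- The exponents of the individual large digits. -/
noncomputable def ee (s f : ℝ) (i : ℕ) : ℝ := f / s * ((1 - s) / s) ^ i

/-- Partial sums of the exponents. -/
noncomputable def EE (s f : ℝ) (i : ℕ) : ℝ := ∑ j ∈ Finset.range i, ee s f j

lemma EE_zero (s f : ℝ) : EE s f 0 = 0 := by simp [EE]

lemma EE_succ (s f : ℝ) (i : ℕ) : EE s f (i + 1) = EE s f i + ee s f i := by
  simp [EE, Finset.sum_range_succ]

lemma EE_rec {s : ℝ} (hs : 0 < s) (f : ℝ) (i : ℕ) :
    s * EE s f (i + 1) = f + (1 - s) * EE s f i := by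
  simp only [EE, ee, ← Finset.mul_sum]
  rw [geom_sum_succ]
  field_simp; ring

lemma fIter_pos {s : ℝ} (hs : 0 < s) (hs1 : s < 1) (k : ℕ) : 0 < fIter s k := by
  induction k with
  | zero => exact hs
  | succ k ih => rw [fIter]; exact div_pos (mul_pos hs ih) (by linarith)

lemma EE_fIter {s : ℝ} (hs : 0 < s) (hs1 : s < 1) (k : ℕ) : EE s (fIter s k) (k + 1) = 1 := by
  induction k with
  | zero => simp [EE, ee, fIter, hs.ne']
  | succ k ih =>
    have hk := fIter_pos hs hs1 k
    have key : ∀ f g : ℝ, g * EE s f (k + 1) = f * EE s g (k + 1) := by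
      intro f g
      simp only [EE, ee, ← Finset.mul_sum]; ring
    have h1 := EE_rec hs (fIter s (k + 1)) (k + 1)
    have h2 := key (fIter s k) (fIter s (k + 1))
    rw [ih] at h2
    have h3 : fIter s (k + 1) * (1 - s + fIter s k) = s * fIter s k := by
      have : 1 - s + fIter s k ≠ 0 := by linarith
      rw [fIter]; field_simp
    have h4 : EE s (fIter s (k + 1)) (k + 1) = fIter s (k + 1) / fIter s k := by
      field_simp; linarith
    rw [h4] at h1
    have : s * EE s (fIter s (k + 1)) (k + 1 + 1) = s * 1 := by
      rw [h1]; field_simp; linarith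
    exact mul_left_cancel₀ hs.ne' this

lemma ee_pos {s f : ℝ} (hs : 0 < s) (hs1 : s < 1) (hf : 0 < f) (i : ℕ) : 0 < ee s f i := by
  unfold ee
  have : 0 < 1 - s := by linarith
  positivity

lemma ee_anti {s f : ℝ} (hs : 1 / 2 < s) (hs1 : s < 1) (hf : 0 < f) {i j : ℕ} (h : i ≤ j) :
    ee s f j ≤ ee s f i := by
  unfold ee
  have h0 : 0 < s := by linarith
  gcongr ?_ * ?_
  apply pow_le_pow_of_le_one
  · apply div_nonneg <;> linarith
  · rw [div_le_one h0]; linarith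
  · exact h

lemma EE_nonneg {s f : ℝ} (hs : 0 < s) (hs1 : s < 1) (hf : 0 < f) (i : ℕ) : 0 ≤ EE s f i :=
  Finset.sum_nonneg fun j _ => (ee_pos hs hs1 hf j).le

lemma two_s_le {s : ℝ} (hs : 0 < s) (hs1 : s < 1) (k : ℕ) : 2 * s - 1 ≤ fIter s k := by
  have h1 := EE_rec hs (fIter s k) (k + 1)
  have h2 := EE_fIter hs hs1 k
  have h3 := EE_succ s (fIter s k) (k + 1)
  have h4 := ee_pos hs hs1 (fIter_pos hs hs1 k) (k + 1)
  rw [h2] at h1 h3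
  nlinarith

lemma ee_mul_sum {s : ℝ} (hs : 0 < s) (hs1 : s < 1) (k : ℕ) :
    ee s (fIter s k) k * ∑ i ∈ Finset.range (k + 1), (s / (1 - s)) ^ i = 1 := by
  have h := EE_fIter hs hs1 k
  refine Eq.trans ?_ h
  rw [EE, ← Finset.sum_range_reflect (fun j => ee s (fIter s k) j), Finset.mul_sum]
  refine Finset.sum_congr rfl fun i hi => ?_
  have hi' : i ≤ k := by simp at hi; omega
  have h1 : (0:ℝ) < 1 - s := by linarith
  have e : k + 1 - 1 - i = k - i := by omega
  rw [e, ee, ee]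
  have h2 : ((1 - s) / s) ^ k = ((1 - s) / s) ^ (k - i) * ((1 - s) / s) ^ i := by
    rw [← pow_add]; congr 1; omega
  have h3 : ((1 - s) / s) ^ i * (s / (1 - s)) ^ i = 1 := by
    rw [← mul_pow]
    have : (1 - s) / s * (s / (1 - s)) = 1 := by field_simp
    rw [this, one_pow]
  rw [h2]
  linear_combination (fIter s k / s * ((1 - s) / s) ^ (k - i)) * h3

lemma ee_strict {s t : ℝ} (hs : 0 < s) (hst : s < t) (ht : t < 1) {k : ℕ} (hk : 1 ≤ k) :
    ee t (fIter t k) k < ee s (fIter s k) k := by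
  have h1 := ee_mul_sum hs (hst.trans ht) k
  have h2 := ee_mul_sum (hs.trans hst) ht k
  have hs' : 0 < 1 - s := by linarith
  have ht' : 0 < 1 - t := by linarith
  have ht0 : 0 < t := by linarith
  have hR : s / (1 - s) < t / (1 - t) := by
    rw [div_lt_div_iff₀ hs' ht']; nlinarith
  have hsum : ∑ i ∈ Finset.range (k + 1), (s / (1 - s)) ^ i <
      ∑ i ∈ Finset.range (k + 1), (t / (1 - t)) ^ i := by
    apply Finset.sum_lt_sum
    · intro i _; gcongr
    · refine ⟨1, by simp; omega, by simpa using hR⟩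
  have p1 := ee_pos hs (hst.trans ht) (fIter_pos hs (hst.trans ht) k) k
  have p2 := ee_pos ht0 ht (fIter_pos ht0 ht k) k
  by_contra hcon
  push Not at hcon
  have hS : 0 < ∑ i ∈ Finset.range (k + 1), (s / (1 - s)) ^ i := by
    by_contra h; push Not at h; nlinarith
  nlinarith [mul_lt_mul_of_pos_left hsum p2, mul_le_mul_of_nonneg_right hcon hS.le]

lemma theta_eq {t : ℝ} (ht : 1 / 2 < t) (ht1 : t < 1) {m : ℕ} (hm : 2 ≤ m) :
    (t ^ m - t * (1 - t) ^ (m - 1)) / (t ^ m - (1 - t) ^ m) =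
      1 - ee t (fIter t (m - 1)) (m - 1) := by
  obtain ⟨k, rfl⟩ : ∃ k, m = k + 1 := ⟨m - 1, by omega⟩
  rw [Nat.add_sub_cancel]
  have h0 : 0 < t := by linarith
  have h1 := ee_mul_sum h0 ht1 k
  have h2 : (0:ℝ) < 1 - t := by linarith
  have hR : 1 < t / (1 - t) := by rw [lt_div_iff₀ h2]; linarith
  rw [geom_sum_eq hR.ne'] at h1
  have hlt : (1 - t) ^ (k + 1) < t ^ (k + 1) := by
    apply pow_lt_pow_left₀ <;> first | linarith | omega
  have hd : t ^ (k + 1) - (1 - t) ^ (k + 1) ≠ 0 := by linarith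
  have h3 : ((t / (1 - t)) ^ (k + 1) - 1) / (t / (1 - t) - 1) =
      (t ^ (k + 1) - (1 - t) ^ (k + 1)) / ((1 - t) ^ k * (2 * t - 1)) := by
    have : t / (1 - t) - 1 = (2 * t - 1) / (1 - t) := by field_simp; ring
    have h5 : (2 * t - 1) ≠ 0 := by linarith
    rw [this, div_pow]
    field_simp
    rw [pow_succ' (1 - t) k]
  rw [h3] at h1
  have h5 : 0 < (2 * t - 1) := by linarith
  have h4 : ee t (fIter t k) k = (1 - t) ^ k * (2 * t - 1) / (t ^ (k + 1) - (1 - t) ^ (k + 1)) := by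
    have hp : (0:ℝ) < (1 - t) ^ k := by positivity
    rw [eq_div_iff hd]
    rw [mul_div_assoc', div_eq_one_iff_eq (by positivity)] at h1
    exact h1
  rw [h4]
  field_simp
  ring

end NAC

open scoped ENNReal NNReal

namespace NAC

/-- The partition function. -/
noncomputable def SS (B s f : ℝ) (n : ℕ) : ℝ≥0∞ :=
  ∑' a : Fin n → ℕ+, ENNReal.ofReal (B ^ (-(n : ℝ) * f) *
          ((contQ n fun i => (a i : ℕ)) : ℝ) ^ (-(2 * s)))

lemma log_le_of_mul {L : EReal} {n : ℕ} (hn : 0 < n) {c : ℝ}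
    (h : (((n : ℝ)⁻¹ : ℝ) : EReal) * L < c) : L ≤ ((n * c : ℝ) : EReal) := by
  by_contra hcon
  push Not at hcon
  have hn' : (0 : ℝ) < n := by exact_mod_cast hn
  have h0 : (0 : EReal) ≤ (((n : ℝ)⁻¹ : ℝ) : EReal) := by
    exact_mod_cast (inv_nonneg.2 hn'.le)
  have := mul_le_mul_of_nonneg_left hcon.le h0
  rw [← EReal.coe_mul, inv_mul_cancel_left₀ hn'.ne'] at this
  exact absurd h (not_lt.2 this)

lemma lt_log_of_mul {L : EReal} {n : ℕ} (hn : 0 < n) {c : ℝ}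
    (h : (c : EReal) < (((n : ℝ)⁻¹ : ℝ) : EReal) * L) : ((n * c : ℝ) : EReal) < L := by
  by_contra hcon
  push Not at hcon
  have hn' : (0 : ℝ) < n := by exact_mod_cast hn
  have h0 : (0 : EReal) ≤ (((n : ℝ)⁻¹ : ℝ) : EReal) := by
    exact_mod_cast (inv_nonneg.2 hn'.le)
  have := mul_le_mul_of_nonneg_left hcon h0
  rw [← EReal.coe_mul, inv_mul_cancel_left₀ hn'.ne'] at this
  exact absurd h (not_lt.2 this)

lemma SS_upper {u : ℕ → ℝ≥0∞}
    (h : atTop.limsup (fun n : ℕ => (((n : ℝ)⁻¹ : ℝ) : EReal) * ENNReal.log (u n)) ≤ 0)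
    {c : ℝ} (hc : 0 < c) : ∀ᶠ n in atTop, u n ≤ ENNReal.ofReal (Real.exp (n * c)) := by
  have h1 : atTop.limsup (fun n : ℕ => (((n : ℝ)⁻¹ : ℝ) : EReal) * ENNReal.log (u n)) < (c : EReal) :=
    h.trans_lt (by exact_mod_cast hc)
  filter_upwards [eventually_lt_of_limsup_lt h1, eventually_gt_atTop 0] with n hn hn0
  have := log_le_of_mul hn0 hn
  rw [← ENNReal.log_le_log_iff, ENNReal.log_ofReal_of_pos (Real.exp_pos _), Real.log_exp]
  exact this

lemma SS_lower {u : ℕ → ℝ≥0∞}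
    (h : ¬ atTop.limsup (fun n : ℕ => (((n : ℝ)⁻¹ : ℝ) : EReal) * ENNReal.log (u n)) ≤ 0)
    (K : ℝ) (N0 : ℕ) : ∃ n ≥ N0, ENNReal.ofReal K < u n := by
  push Not at h
  obtain ⟨c, hc0, hc⟩ := EReal.lt_iff_exists_real_btwn.1 h
  have hc0' : 0 < c := by exact_mod_cast hc0
  have h1 := frequently_lt_of_lt_limsup (by isBoundedDefault) hc
  have h2 : ∀ᶠ n : ℕ in atTop, N0 ≤ n ∧ 0 < n ∧ K ≤ n * c := by
    filter_upwards [eventually_ge_atTop N0, eventually_gt_atTop 0,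
      (tendsto_natCast_atTop_atTop.atTop_mul_const hc0').eventually_ge_atTop K] with n a b d
    exact ⟨a, b, d⟩
  obtain ⟨n, hn, hn1, hn2, hn3⟩ := (h1.and_eventually h2).exists
  refine ⟨n, hn1, ?_⟩
  have h3 := lt_log_of_mul hn2 hn
  have h4 : ENNReal.ofReal (Real.exp (n * c)) < u n := by
    rw [← ENNReal.log_lt_log_iff, ENNReal.log_ofReal_of_pos (Real.exp_pos _), Real.log_exp]
    exact h3
  refine lt_of_le_of_lt (ENNReal.ofReal_le_ofReal ?_) h4
  linarith [Real.add_one_le_exp (n * c)]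

lemma tsum_pi_prod (g : ℕ+ → ℝ≥0∞) (i : ℕ) :
    ∑' b : Fin i → ℕ+, ∏ j, g (b j) = (∑' k, g k) ^ i := by
  induction i with
  | zero => simp
  | succ i ih =>
    rw [← (Fin.consEquiv (fun _ : Fin (i + 1) => ℕ+)).tsum_eq, ENNReal.tsum_prod']
    simp only [Fin.consEquiv, Equiv.coe_fn_mk, Fin.prod_univ_succ, Fin.cons_zero, Fin.cons_succ]
    simp only [ENNReal.tsum_mul_left, ih, ENNReal.tsum_mul_right]
    ring

/-- Gluing two finite words to a sequence. -/
def glue (n i : ℕ) (a : Fin n → ℕ+) (b : Fin i → ℕ+) (p : ℕ) : ℕ :=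
  if h : p < n then a ⟨p, h⟩ else if h2 : p - n < i then b ⟨p - n, h2⟩ else 1

lemma glue_pos (n i : ℕ) (a : Fin n → ℕ+) (b : Fin i → ℕ+) : Pos (glue n i a b) := by
  intro p
  unfold glue
  split_ifs
  · exact PNat.one_le _
  · exact PNat.one_le _
  · exact le_rfl

lemma glue_Q (n i : ℕ) (a : Fin n → ℕ+) (b : Fin i → ℕ+) :
    contQ n (fun j => (a j : ℕ)) = Q n (glue n i a b) := by
  rw [← contQ_eq_Q]
  congr 1
  funext j
  simp [glue]

lemma glue_prod (n i : ℕ) (a : Fin n → ℕ+) (b : Fin i → ℕ+) :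
    ∏ j ∈ Finset.range i, glue n i a b (n + j) = ∏ j, (b j : ℕ) := by
  rw [Finset.prod_range]
  refine Finset.prod_congr rfl fun j _ => ?_
  simp [glue]

/-- Covering sets. -/
def cov (B s f : ℝ) (n i : ℕ) (a : Fin n → ℕ+) (b : Fin i → ℕ+) : Set ℝ :=
  {x | ((∏ j, (b j : ℕ) : ℕ) : ℝ) ≤ B ^ (n * EE s f i) ∧
    ∃ z : ℝ, 0 ≤ z ∧ z ≤ ((∏ j, (b j : ℕ) : ℕ) : ℝ) / B ^ (n * EE s f (i + 1)) ∧
      x = cf (n + i) (glue n i a b) z}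

lemma real_key {B s f η q P : ℝ} {n i : ℕ} (hB : 1 < B) (hs : 0 < s) (hs1 : s < 1) (hf : 0 < f)
    (hη : 0 < η) (hq : 1 ≤ q) (hqn : (2 : ℝ) ^ n ≤ 2 * q ^ 2) (hP : 1 ≤ P)
    (hPY : P ≤ B ^ (n * EE s f i)) :
    (1 / (q ^ 2 * P * B ^ (n * EE s f (i + 1)))) ^ (s + η) ≤
      2 ^ η * (2 ^ (-η)) ^ n * (B ^ (-(n : ℝ) * f) * q ^ (-(2 * s))) * P ^ (-(1 + η)) := by
  have hB0 : 0 < B := by linarith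
  have hq0 : 0 < q := by linarith
  have hP0 : 0 < P := by linarith
  set Y := B ^ (n * EE s f (i + 1)) with hY
  have hY1 : 1 ≤ Y := Real.one_le_rpow hB.le
    (mul_nonneg (Nat.cast_nonneg _) (EE_nonneg hs hs1 hf _))
  have hY0 : 0 < Y := by linarith
  have e1 : (1 / (q ^ 2 * P * Y)) ^ (s + η) =
      (q ^ (-(2 * s)) * (q ^ 2) ^ (-η)) * (P ^ (-(1 + η)) * P ^ (1 - s)) * (Y ^ (-s) * Y ^ (-η)) := by
    rw [one_div, Real.inv_rpow (by positivity), ← Real.rpow_neg (by positivity),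
      Real.mul_rpow (by positivity) (by positivity), Real.mul_rpow (by positivity) (by positivity),
      ← Real.rpow_add hP0, ← Real.rpow_add hY0, ← Real.rpow_natCast, ← Real.rpow_mul hq0.le,
      ← Real.rpow_mul hq0.le, ← Real.rpow_add hq0]
    have x1 : ((2 : ℕ) : ℝ) * -(s + η) = -(2 * s) + ((2 : ℕ) : ℝ) * -η := by push_cast; ring
    have x2 : -(1 + η) + (1 - s) = -(s + η) := by ring
    have x3 : -s + -η = -(s + η) := by ring
    rw [x1, x2, x3]
  have h1 : (q ^ 2) ^ (-η) ≤ 2 ^ η * (2 ^ (-η)) ^ n := by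
    have h : (2 : ℝ) ^ n / 2 ≤ q ^ 2 := by linarith
    calc (q ^ 2) ^ (-η) ≤ ((2 : ℝ) ^ n / 2) ^ (-η) :=
          Real.rpow_le_rpow_of_nonpos (by positivity) h (by linarith)
      _ = 2 ^ η * (2 ^ (-η)) ^ n := by
          rw [Real.div_rpow (by positivity) (by positivity), Real.rpow_neg (by norm_num : (0:ℝ) ≤ 2),
            div_inv_eq_mul, ← Real.rpow_natCast, ← Real.rpow_natCast, ← Real.rpow_mul (by norm_num),
            ← Real.rpow_neg (by norm_num), ← Real.rpow_mul (by norm_num)]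
          rw [mul_comm]; congr 2; ring
  have h2 : P ^ (1 - s) ≤ (B ^ (n * EE s f i)) ^ (1 - s) :=
    Real.rpow_le_rpow hP0.le hPY (by linarith)
  have h3 : Y ^ (-η) ≤ 1 := Real.rpow_le_one_of_one_le_of_nonpos hY1 (by linarith)
  have h4 : (B ^ (n * EE s f i)) ^ (1 - s) * Y ^ (-s) = B ^ (-(n : ℝ) * f) := by
    rw [hY, ← Real.rpow_mul hB0.le, ← Real.rpow_mul hB0.le, ← Real.rpow_add hB0]
    congr 1
    have := EE_rec hs f i
    linear_combination (-(n : ℝ)) * this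
  rw [e1]
  calc (q ^ (-(2 * s)) * (q ^ 2) ^ (-η)) * (P ^ (-(1 + η)) * P ^ (1 - s)) * (Y ^ (-s) * Y ^ (-η))
      ≤ (q ^ (-(2 * s)) * (2 ^ η * (2 ^ (-η)) ^ n)) *
        (P ^ (-(1 + η)) * (B ^ (n * EE s f i)) ^ (1 - s)) * (Y ^ (-s) * 1) := by gcongr
    _ = _ := by rw [← h4]; ring

lemma ediam_cov {B s f : ℝ} {n i : ℕ} (hB : 1 < B) (a : Fin n → ℕ+) (b : Fin i → ℕ+) :
    Metric.ediam (cov B s f n i a b) ≤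
      ENNReal.ofReal (1 / ((contQ n fun i => (a i : ℕ) : ℝ) ^ 2 * ((∏ j, (b j : ℕ) : ℕ) : ℝ) *
        B ^ (n * EE s f (i + 1)))) := by
  have hB0 : 0 < B := by linarith
  apply Metric.ediam_le
  rintro x ⟨-, z, hz0, hz, rfl⟩ y ⟨-, w, hw0, hw, rfl⟩
  rw [edist_dist, Real.dist_eq]
  apply ENNReal.ofReal_le_ofReal
  have hpos := glue_pos n i a b
  refine (cf_sub_le hpos _ hz0 hw0).trans ?_
  have h1 := Q_mul_prod_le (glue n i a b) n i
  rw [glue_prod, ← glue_Q] at h1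
  have hq1 : 1 ≤ contQ n fun i => (a i : ℕ) := by
    rw [glue_Q n i a b]; exact Q_pos hpos n
  have hP1 : 1 ≤ ∏ j, (b j : ℕ) := Finset.one_le_prod' fun j _ => PNat.one_le _
  set P := ∏ j, (b j : ℕ) with hPdef
  set q := contQ n fun i => (a i : ℕ) with hqdef
  have hP0 : (1 : ℝ) ≤ (P : ℝ) := by exact_mod_cast hP1
  have hq0 : (1 : ℝ) ≤ (q : ℝ) := by exact_mod_cast hq1
  have h1' : (q : ℝ) * P ≤ Q (n + i) (glue n i a b) := by exact_mod_cast h1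
  set Y := B ^ (n * EE s f (i + 1)) with hY
  have hY0 : 0 < Y := by positivity
  have h2 : |z - w| ≤ P / Y := by rw [abs_le]; constructor <;> linarith
  calc |z - w| / (Q (n + i) (glue n i a b) : ℝ) ^ 2 ≤ (P / Y) / ((q : ℝ) * P) ^ 2 := by
        gcongr
    _ = _ := by field_simp

lemma ediam_cov_rpow {B s f η : ℝ} {n i : ℕ} (hB : 1 < B) (hs : 0 < s) (hs1 : s < 1) (hf : 0 < f)
    (hη : 0 < η) (a : Fin n → ℕ+) (b : Fin i → ℕ+) :
    Metric.ediam (cov B s f n i a b) ^ (s + η) ≤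
      ENNReal.ofReal (2 ^ η) * ENNReal.ofReal (2 ^ (-η)) ^ n *
      ENNReal.ofReal (B ^ (-(n : ℝ) * f) * (contQ n fun i => (a i : ℕ) : ℝ) ^ (-(2 * s))) *
      ∏ j, ENNReal.ofReal ((b j : ℝ) ^ (-(1 + η))) := by
  by_cases hP : ((∏ j, (b j : ℕ) : ℕ) : ℝ) ≤ B ^ (n * EE s f i)
  · have hB0 : 0 < B := by linarith
    refine (ENNReal.rpow_le_rpow (ediam_cov hB a b) (by linarith)).trans ?_
    have hpos := glue_pos n i a b
    have hq1 : 1 ≤ contQ n fun i => (a i : ℕ) := by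
      rw [glue_Q n i a b]; exact Q_pos hpos n
    have hP1 : 1 ≤ ∏ j, (b j : ℕ) := Finset.one_le_prod' fun j _ => PNat.one_le _
    have hqn := (two_pow_le_Q hpos n).1
    rw [← glue_Q] at hqn
    rw [ENNReal.ofReal_rpow_of_nonneg (by positivity) (by linarith)]
    refine (ENNReal.ofReal_le_ofReal (real_key (i := i) hB hs hs1 hf hη (by exact_mod_cast hq1)
      (by exact_mod_cast hqn) (by exact_mod_cast hP1) hP)).trans (le_of_eq ?_)
    rw [ENNReal.ofReal_mul (by positivity), ENNReal.ofReal_mul (by positivity),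
      ENNReal.ofReal_mul (by positivity), ENNReal.ofReal_pow (by positivity)]
    congr 1
    rw [← ENNReal.ofReal_prod_of_nonneg (fun j _ => by positivity)]
    congr 1
    push_cast
    rw [← Real.finsetProd_rpow _ _ (fun j _ => by positivity)]
  · have : cov B s f n i a b = ∅ := by
      ext x; simp only [cov, mem_setOf_eq, mem_empty_iff_false, iff_false]
      exact fun h => hP h.1
    rw [this, Metric.ediam_empty, ENNReal.zero_rpow_of_pos (by linarith)]
    exact bot_le

lemma cov_cover {B s f : ℝ} {m : ℕ} (hm : 1 ≤ m) (hB : 1 < B) (hE : EE s f m = 1) {x : ℝ}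
    (hx : x ∈ Ioo (0:ℝ) 1) (hi : Irrational x)
    (hinf : {n : ℕ | B ^ n ≤ ∏ i ∈ Finset.range m, (pq x (n + i) : ℝ)}.Infinite) (N : ℕ) :
    ∃ n ≥ N, ∃ i < m, ∃ a b, x ∈ cov B s f n i a b := by
  obtain ⟨n', hn', hnN⟩ := hinf.exists_gt N
  obtain ⟨n, rfl⟩ : ∃ n, n' = n + 1 := ⟨n' - 1, by omega⟩
  have hB0 : 0 < B := by linarith
  simp only [mem_setOf_eq] at hn'
  set A : ℕ → ℕ := fun i => pq x (i + 1) with hA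
  have hpos : Pos A := pq_pos hx hi
  have h1 : ∃ i, B ^ (n * EE s f (i + 1)) ≤ ((∏ j ∈ Finset.range (i + 1), A (n + j) : ℕ) : ℝ) := by
    refine ⟨m - 1, ?_⟩
    rw [Nat.sub_add_cancel hm, hE, mul_one, Real.rpow_natCast]
    refine (pow_le_pow_right₀ hB.le (Nat.le_succ n)).trans (hn'.trans (le_of_eq ?_))
    push_cast
    refine Finset.prod_congr rfl fun i _ => ?_
    simp only [hA]; congr 2; ring
  classical
  have hfind := Nat.find_spec h1
  have hmin := fun k => @Nat.find_min _ _ h1 k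
  have hle : Nat.find h1 ≤ m - 1 := by
    apply Nat.find_min' h1
    rw [Nat.sub_add_cancel hm, hE, mul_one, Real.rpow_natCast]
    refine (pow_le_pow_right₀ hB.le (Nat.le_succ n)).trans (hn'.trans (le_of_eq ?_))
    push_cast
    refine Finset.prod_congr rfl fun i _ => ?_
    simp only [hA]; congr 2; ring
  set i := Nat.find h1 with hidef
  let a : Fin n → ℕ+ := fun j => ⟨A j, hpos j⟩
  let b : Fin i → ℕ+ := fun j => ⟨A (n + j), hpos _⟩
  have hPb : ∏ j, (b j : ℕ) = ∏ j ∈ Finset.range i, A (n + j) := by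
    rw [Finset.prod_range]; rfl
  refine ⟨n, by omega, i, by omega, a, b, ?_, gaussMap^[n + i] x, ?_, ?_, ?_⟩
  · rw [hPb]
    rcases Nat.eq_zero_or_pos i with h0 | h0
    · rw [h0]; simp [EE_zero]
    · have := hmin (i - 1) (by omega)
      rw [Nat.sub_add_cancel h0] at this
      exact (not_le.1 this).le
  · exact (gauss_iter_props hx hi _).1.1.le
  · have hg := (gauss_iter_props hx hi (n + i)).1.1
    rw [hPb]
    rw [Finset.prod_range_succ] at hfind
    have e : A (n + i) = ⌊1 / gaussMap^[n + i] x⌋₊ := rfl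
    have h2 : (A (n + i) : ℝ) ≤ 1 / gaussMap^[n + i] x := by
      rw [e]; exact Nat.floor_le (by positivity)
    rw [le_div_iff₀ hg] at h2
    rw [le_div_iff₀ (by positivity)]
    push_cast at hfind ⊢
    calc gaussMap^[n + i] x * B ^ (n * EE s f (i + 1))
        ≤ gaussMap^[n + i] x * ((∏ j ∈ Finset.range i, (A (n + j) : ℝ)) * A (n + i)) := by gcongr
      _ = (∏ j ∈ Finset.range i, (A (n + j) : ℝ)) * (A (n + i) * gaussMap^[n + i] x) := by ring
      _ ≤ (∏ j ∈ Finset.range i, (A (n + j) : ℝ)) * 1 := by gcongr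
      _ = _ := mul_one _
  · rw [cf_congr (b := A)]
    · exact (gauss_iter_props hx hi _).2.2
    · intro p hp
      unfold glue
      split_ifs with h1 h2
      · rfl
      · change A (n + (p - n)) = A p
        congr 1; omega
      · omega

lemma upper {B s η : ℝ} {m : ℕ} (hm : 1 ≤ m) (hB : 1 < B) (hs : 0 < s) (hs1 : s < 1) (hη : 0 < η)
    (hlim : atTop.limsup (fun n : ℕ => (((n : ℝ)⁻¹ : ℝ) : EReal) *
      ENNReal.log (SS B s (fIter s (m - 1)) n)) ≤ 0) :
    Measure.hausdorffMeasure (s + η) {x : ℝ | x ∈ Set.Ioo (0 : ℝ) 1 ∧ Irrational x ∧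
      {n : ℕ | B ^ n ≤ ∏ i ∈ Finset.range m, (pq x (n + i) : ℝ)}.Infinite} = 0 := by
  set f := fIter s (m - 1) with hf
  have hf0 : 0 < f := fIter_pos hs hs1 _
  have hE : EE s f m = 1 := by
    have := EE_fIter hs hs1 (m - 1)
    rwa [Nat.sub_add_cancel hm] at this
  have hB0 : 0 < B := by linarith
  set Z : ℝ≥0∞ := ∑' k : ℕ+, ENNReal.ofReal ((k : ℝ) ^ (-(1 + η))) with hZ
  have hZtop : Z ≠ ⊤ := by
    have h1 : Summable (fun k : ℕ => (k : ℝ) ^ (-(1 + η))) := Real.summable_nat_rpow.2 (by linarith)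
    have h2 : Summable (fun k : ℕ+ => ((k : ℕ) : ℝ) ^ (-(1 + η))) :=
      h1.comp_injective PNat.coe_injective
    exact h2.tsum_ofReal_ne_top
  set ρ : ℝ≥0∞ := ENNReal.ofReal (2 ^ (-η)) with hρ
  -- geometric bound
  set c : ℝ := η * Real.log 2 / 2 with hc
  have hl2 : 0 < Real.log 2 := Real.log_pos (by norm_num)
  have hc0 : 0 < c := by positivity
  set ρ' : ℝ≥0∞ := ENNReal.ofReal (Real.exp (-c)) with hρ'
  have hρρ : ∀ n : ℕ, ρ ^ n * ENNReal.ofReal (Real.exp (n * c)) = ρ' ^ n := by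
    intro n
    rw [hρ, hρ', ← ENNReal.ofReal_pow (by positivity), ← ENNReal.ofReal_pow (by positivity),
      ← ENNReal.ofReal_mul (by positivity)]
    congr 1
    rw [Real.exp_nat_mul, ← mul_pow]
    congr 1
    rw [Real.rpow_def_of_pos (by norm_num), ← Real.exp_add]
    congr 1; rw [hc]; ring
  have hρ'1 : ρ' < 1 := by
    rw [hρ', ENNReal.ofReal_lt_one, Real.exp_lt_one_iff]; linarith
  set K : ℝ≥0∞ := ENNReal.ofReal (2 ^ η) * ∑ i : Fin m, Z ^ (i : ℕ) with hK
  have hKtop : K ≠ ⊤ := by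
    refine ENNReal.mul_ne_top ENNReal.ofReal_ne_top ?_
    exact ENNReal.sum_ne_top.2 fun i _ => ENNReal.pow_ne_top hZtop
  -- index type
  let ι : ℕ → Type := fun N => Σ n : ℕ, Σ i : Fin m, (Fin (N + n) → ℕ+) × (Fin i → ℕ+)
  let t : ∀ N, ι N → Set ℝ := fun N p => cov B s f (N + p.1) p.2.1 p.2.2.1 p.2.2.2
  have hsum : ∀ᶠ N in atTop, ∑' p, Metric.ediam (t N p) ^ (s + η) ≤ K * (ρ' ^ N * (1 - ρ')⁻¹) := by
    obtain ⟨N0, hN0⟩ := eventually_atTop.1 (SS_upper hlim hc0)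
    filter_upwards [eventually_ge_atTop N0] with N hN
    rw [ENNReal.tsum_sigma']
    have hn : ∀ n : ℕ, ∑' b : (Σ i : Fin m, (Fin (N + n) → ℕ+) × (Fin i → ℕ+)),
        Metric.ediam (t N ⟨n, b⟩) ^ (s + η) ≤ K * ρ' ^ (N + n) := by
      intro n
      rw [ENNReal.tsum_sigma']
      calc ∑' (i : Fin m) (b : (Fin (N + n) → ℕ+) × (Fin i → ℕ+)),
            Metric.ediam (t N ⟨n, i, b⟩) ^ (s + η)
          ≤ ∑' (i : Fin m) (b : (Fin (N + n) → ℕ+) × (Fin i → ℕ+)),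
            ENNReal.ofReal (2 ^ η) * ρ ^ (N + n) *
            ENNReal.ofReal (B ^ (-((N + n : ℕ) : ℝ) * f) *
              (contQ (N + n) fun i => (b.1 i : ℕ) : ℝ) ^ (-(2 * s))) *
            ∏ j, ENNReal.ofReal ((b.2 j : ℝ) ^ (-(1 + η))) :=
            ENNReal.tsum_le_tsum fun i => ENNReal.tsum_le_tsum fun b =>
              ediam_cov_rpow hB hs hs1 hf0 hη b.1 b.2
        _ = ∑' (i : Fin m), ENNReal.ofReal (2 ^ η) * ρ ^ (N + n) * SS B s f (N + n) * Z ^ (i : ℕ) := by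
            refine tsum_congr fun i => ?_
            rw [ENNReal.tsum_prod']
            simp only [ENNReal.tsum_mul_left, ENNReal.tsum_mul_right]
            rw [tsum_pi_prod (fun k => ENNReal.ofReal ((k : ℝ) ^ (-(1 + η))))]
            rfl
        _ ≤ ∑' (i : Fin m), ENNReal.ofReal (2 ^ η) * ρ ^ (N + n) *
              ENNReal.ofReal (Real.exp ((N + n : ℕ) * c)) * Z ^ (i : ℕ) := by
            refine ENNReal.tsum_le_tsum fun i => ?_
            gcongr
            exact hN0 _ (by omega)
        _ = K * ρ' ^ (N + n) := by
            rw [← hρρ, tsum_fintype, ← Finset.mul_sum, hK]; ring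
    calc _ ≤ ∑' n : ℕ, K * ρ' ^ (N + n) := ENNReal.tsum_le_tsum hn
      _ = _ := by
        rw [ENNReal.tsum_mul_left]
        simp only [pow_add, ENNReal.tsum_mul_left, ENNReal.tsum_geometric]
  have hr : Tendsto (fun N : ℕ => ENNReal.ofReal (2 * (1 / 2) ^ N)) atTop (nhds 0) := by
    rw [← ENNReal.ofReal_zero]
    apply ENNReal.tendsto_ofReal
    have := (tendsto_pow_atTop_nhds_zero_of_lt_one (r := (1 / 2 : ℝ)) (by norm_num)
      (by norm_num)).const_mul 2
    simpa using this
  haveI : ∀ N, Countable (ι N) := fun N => inferInstance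
  have hmain := Measure.hausdorffMeasure_le_liminf_tsum (s + η)
    {x : ℝ | x ∈ Set.Ioo (0 : ℝ) 1 ∧ Irrational x ∧
      {n : ℕ | B ^ n ≤ ∏ i ∈ Finset.range m, (pq x (n + i) : ℝ)}.Infinite}
    (fun N : ℕ => ENNReal.ofReal (2 * (1 / 2) ^ N)) hr t ?_ ?_
  · have hlim0 : Tendsto (fun N : ℕ => K * (ρ' ^ N * (1 - ρ')⁻¹)) atTop (nhds 0) := by
      have h1 : Tendsto (fun N : ℕ => ρ' ^ N) atTop (nhds 0) :=
        ENNReal.tendsto_pow_atTop_nhds_zero_of_lt_one hρ'1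
      have h2 : (1 - ρ')⁻¹ ≠ ⊤ := by
        rw [ENNReal.inv_ne_top]; exact (tsub_pos_of_lt hρ'1).ne'
      have h3 := ENNReal.Tendsto.mul_const h1 (Or.inr h2)
      have h4 := ENNReal.Tendsto.const_mul h3 (Or.inr hKtop)
      simpa using h4
    refine le_antisymm (hmain.trans ?_) (bot_le)
    calc _ ≤ liminf (fun N : ℕ => K * (ρ' ^ N * (1 - ρ')⁻¹)) atTop := liminf_le_liminf hsum
      _ = 0 := hlim0.liminf_eq
  · refine Eventually.of_forall fun N p => (ediam_cov hB _ _).trans (ENNReal.ofReal_le_ofReal ?_)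
    obtain ⟨n, i, a, b⟩ := p
    simp only
    have hpos := glue_pos (N + n) i a b
    have hq1 : 1 ≤ contQ (N + n) fun i => (a i : ℕ) := by
      rw [glue_Q (N + n) i a b]; exact Q_pos hpos _
    have hP1 : 1 ≤ ∏ j, (b j : ℕ) := Finset.one_le_prod' fun j _ => PNat.one_le _
    have hqn := (two_pow_le_Q hpos (N + n)).1
    rw [← glue_Q] at hqn
    have hq1' : (1 : ℝ) ≤ (contQ (N + n) fun i => (a i : ℕ) : ℝ) := by exact_mod_cast hq1
    have hP1' : (1 : ℝ) ≤ ((∏ j, (b j : ℕ) : ℕ) : ℝ) := by exact_mod_cast hP1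
    have hqn' : (2 : ℝ) ^ (N + n) ≤ 2 * (contQ (N + n) fun i => (a i : ℕ) : ℝ) ^ 2 := by
      exact_mod_cast hqn
    have hY1 : 1 ≤ B ^ (((N + n : ℕ) : ℝ) * EE s f (i + 1)) := Real.one_le_rpow hB.le
      (mul_nonneg (Nat.cast_nonneg _) (EE_nonneg hs hs1 hf0 _))
    have h2N : (2 : ℝ) ^ N ≤ 2 ^ (N + n) := pow_le_pow_right₀ (by norm_num) (by omega)
    have hbig : (2 : ℝ) ^ N / 2 ≤ (contQ (N + n) fun i => (a i : ℕ) : ℝ) ^ 2 *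
        ((∏ j, (b j : ℕ) : ℕ) : ℝ) * B ^ (((N + n : ℕ) : ℝ) * EE s f (i + 1)) := by
      have : (2 : ℝ) ^ N / 2 ≤ (contQ (N + n) fun i => (a i : ℕ) : ℝ) ^ 2 * 1 * 1 := by linarith
      refine this.trans ?_
      gcongr
    calc _ ≤ 1 / ((2 : ℝ) ^ N / 2) := one_div_le_one_div_of_le (by positivity) hbig
      _ = _ := by rw [one_div_pow]; field_simp
  · refine Eventually.of_forall fun N x hx => ?_
    obtain ⟨n, hn, i, hi, a, b, hab⟩ := cov_cover (s := s) (f := f) hm hB hE hx.1 hx.2.1 hx.2.2 N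
    obtain ⟨k, rfl⟩ := Nat.exists_eq_add_of_le hn
    exact mem_iUnion.2 ⟨⟨k, ⟨i, hi⟩, a, b⟩, hab⟩

end NAC

namespace NAC

/-- Data for the construction of the Cantor-type subset. -/
structure Dat where
  B : ℝ
  s : ℝ
  f : ℝ
  m : ℕ
  N : ℕ
  M : ℕ
  W : Finset (Fin N → ℕ)
  hB : 1 < B
  hs : 1 / 2 < s
  hs1 : s < 1
  hm : 2 ≤ m
  hmN : m ≤ N
  hf : 0 < f
  hf2 : 2 * s - 1 ≤ f
  hE : EE s f m = 1
  hM : 1 ≤ M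
  hWpos : ∀ w ∈ W, ∀ i, 1 ≤ w i
  hWM : ∀ w ∈ W, ∀ i, w i ≤ M
  hZ : 8 ≤ ∑ w ∈ W, B ^ (-(N : ℝ) * f) * (contQ N w : ℝ) ^ (-(2 * s))

namespace Dat
variable (D : Dat)

lemma N_pos : 0 < D.N := by have := D.hm; have := D.hmN; omega
lemma B_pos : 0 < D.B := by linarith [D.hB]
lemma s_pos : 0 < D.s := by linarith [D.hs]

/-- The main constant. -/
noncomputable def C1 : ℝ := 4 ^ D.N * 2 ^ D.m * D.B

lemma two_le_C1 : 2 ≤ D.C1 := by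
  have h1 : (1 : ℝ) ≤ 4 ^ D.N := one_le_pow₀ (by norm_num)
  have h2 : (2 : ℝ) ≤ 2 ^ D.m := by
    calc (2 : ℝ) = 2 ^ 1 := by norm_num
      _ ≤ 2 ^ D.m := pow_le_pow_right₀ (by norm_num) (by have := D.hm; omega)
  have h3 := D.hB
  unfold C1
  calc (2 : ℝ) = 1 * 2 * 1 := by norm_num
    _ ≤ _ := by gcongr

/-- The control sequence. -/
noncomputable def E : ℕ → ℝ
  | 0 => 1
  | k + 1 => if E k ≤ 1 then
      E k * (D.C1 * D.B ^ (((k * D.N : ℕ) : ℝ) * (2 * D.s - 1)) * D.B ^ ((D.N : ℝ) * D.f))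
      else E k / 2

/-- Special blocks. -/
def spec (k : ℕ) : Prop := D.E k ≤ 1

lemma E_succ_spec {k : ℕ} (h : D.spec k) : D.E (k + 1) =
    D.E k * (D.C1 * D.B ^ (((k * D.N : ℕ) : ℝ) * (2 * D.s - 1)) * D.B ^ ((D.N : ℝ) * D.f)) := by
  unfold spec at h
  rw [E, if_pos h]

lemma E_succ_free {k : ℕ} (h : ¬ D.spec k) : D.E (k + 1) = D.E k / 2 := by
  unfold spec at h
  rw [E, if_neg h]

lemma factor_ge (k : ℕ) :
    2 ≤ D.C1 * D.B ^ (((k * D.N : ℕ) : ℝ) * (2 * D.s - 1)) * D.B ^ ((D.N : ℝ) * D.f) := by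
  have h1 : 1 ≤ D.B ^ (((k * D.N : ℕ) : ℝ) * (2 * D.s - 1)) := Real.one_le_rpow D.hB.le
    (mul_nonneg (Nat.cast_nonneg _) (by linarith [D.hs]))
  have h2 : 1 ≤ D.B ^ ((D.N : ℝ) * D.f) := Real.one_le_rpow D.hB.le
    (mul_nonneg (Nat.cast_nonneg _) D.hf.le)
  have h3 := D.two_le_C1
  have h4 : 2 * 1 ≤ D.C1 * D.B ^ (((k * D.N : ℕ) : ℝ) * (2 * D.s - 1)) :=
    mul_le_mul h3 h1 (by norm_num) (by linarith)
  nlinarith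

lemma E_gt (k : ℕ) : 1 / 2 < D.E k := by
  induction k with
  | zero => rw [E]; norm_num
  | succ k ih =>
    by_cases h : D.spec k
    · rw [D.E_succ_spec h]
      have := D.factor_ge k
      nlinarith
    · rw [D.E_succ_free h]
      unfold spec at h
      linarith

lemma not_adj {k : ℕ} (h : D.spec k) : ¬ D.spec (k + 1) := by
  intro h'
  have h1 := D.E_gt k
  have := D.factor_ge k
  unfold spec at h'
  rw [D.E_succ_spec h] at h'
  nlinarith

lemma exists_spec (k0 : ℕ) : ∃ k ≥ k0, D.spec k := by
  by_contra hcon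
  push Not at hcon
  have h1 : ∀ i, D.E (k0 + i) = D.E k0 * (1 / 2) ^ i := by
    intro i
    induction i with
    | zero => simp
    | succ i ih =>
      rw [← add_assoc, D.E_succ_free (hcon _ (by omega)), ih]; ring
  have h2 := (tendsto_pow_atTop_nhds_zero_of_lt_one (r := (1 / 2 : ℝ)) (by norm_num)
      (by norm_num)).const_mul (D.E k0)
  rw [mul_zero] at h2
  obtain ⟨i, hi⟩ := (h2.eventually_lt_const (by norm_num : (0:ℝ) < 1 / 2)).exists
  rw [← h1] at hi
  linarith [D.E_gt (k0 + i)]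

lemma E_bound (k : ℕ) : D.E k * D.B ^ (-((k * D.N : ℕ) : ℝ) * D.f) ≤ D.C1 := by
  have hB0 := D.B_pos
  induction k with
  | zero => simp [E]; linarith [D.two_le_C1]
  | succ k ih =>
    have hE0 : 0 < D.E k := by linarith [D.E_gt k]
    have e : D.B ^ (-(((k + 1) * D.N : ℕ) : ℝ) * D.f) =
        D.B ^ (-((k * D.N : ℕ) : ℝ) * D.f) * D.B ^ (-((D.N : ℝ) * D.f)) := by
      rw [← Real.rpow_add hB0]; congr 1; push_cast; ring
    by_cases h : D.spec k
    · rw [D.E_succ_spec h, e]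
      unfold spec at h
      have e2 : D.B ^ ((D.N : ℝ) * D.f) * D.B ^ (-((D.N : ℝ) * D.f)) = 1 := by
        rw [← Real.rpow_add hB0]; simp
      have e3 : D.B ^ (((k * D.N : ℕ) : ℝ) * (2 * D.s - 1)) *
          D.B ^ (-((k * D.N : ℕ) : ℝ) * D.f) ≤ 1 := by
        rw [← Real.rpow_add hB0]
        apply Real.rpow_le_one_of_one_le_of_nonpos D.hB.le
        have : (0 : ℝ) ≤ ((k * D.N : ℕ) : ℝ) := Nat.cast_nonneg _
        nlinarith [D.hf2]
      have hC : 0 ≤ D.C1 := by linarith [D.two_le_C1]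
      calc _ = D.E k * D.C1 * (D.B ^ (((k * D.N : ℕ) : ℝ) * (2 * D.s - 1)) *
          D.B ^ (-((k * D.N : ℕ) : ℝ) * D.f)) *
          (D.B ^ ((D.N : ℝ) * D.f) * D.B ^ (-((D.N : ℝ) * D.f))) := by ring
        _ ≤ 1 * D.C1 * 1 * 1 := by rw [e2]; gcongr
        _ = _ := by ring
    · rw [D.E_succ_free h, e]
      have e4 : D.B ^ (-((D.N : ℝ) * D.f)) ≤ 1 :=
        Real.rpow_le_one_of_one_le_of_nonpos D.hB.le
          (neg_nonpos.2 (mul_nonneg (Nat.cast_nonneg _) D.hf.le))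
      calc _ = (D.E k * D.B ^ (-((k * D.N : ℕ) : ℝ) * D.f)) * (D.B ^ (-((D.N : ℝ) * D.f)) / 2) := by
            ring
        _ ≤ (D.E k * D.B ^ (-((k * D.N : ℕ) : ℝ) * D.f)) * 1 := by
            gcongr; linarith
        _ ≤ _ := by rw [mul_one]; exact ih

/-- Size of the special digits. -/
noncomputable def X (k i : ℕ) : ℕ := ⌈D.B ^ (((k * D.N + 1 : ℕ) : ℝ) * ee D.s D.f i)⌉₊

lemma ee_pos' (i : ℕ) : 0 < ee D.s D.f i := ee_pos D.s_pos D.hs1 D.hf i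

lemma le_X (k i : ℕ) : D.B ^ (((k * D.N + 1 : ℕ) : ℝ) * ee D.s D.f i) ≤ D.X k i := Nat.le_ceil _

lemma one_lt_pow (k i : ℕ) : 1 < D.B ^ (((k * D.N + 1 : ℕ) : ℝ) * ee D.s D.f i) :=
  Real.one_lt_rpow D.hB (mul_pos (by exact_mod_cast Nat.succ_pos _) (D.ee_pos' i))

lemma two_le_X (k i : ℕ) : 2 ≤ D.X k i := by
  have : (1 : ℝ) < D.X k i := (D.one_lt_pow k i).trans_le (D.le_X k i)
  exact_mod_cast this

lemma X_pos (k i : ℕ) : (0 : ℝ) < D.X k i := by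
  have := D.two_le_X k i
  exact_mod_cast (by omega : 0 < D.X k i)

lemma X_le (k i : ℕ) : (D.X k i : ℝ) ≤ 2 * D.B ^ (((k * D.N + 1 : ℕ) : ℝ) * ee D.s D.f i) := by
  have h := D.one_lt_pow k i
  have := (Nat.ceil_lt_add_one (zero_le_one.trans h.le)).le
  unfold X
  linarith

lemma prod_pow (k i : ℕ) : ∏ j ∈ Finset.range i, D.B ^ (((k * D.N + 1 : ℕ) : ℝ) * ee D.s D.f j) =
    D.B ^ (((k * D.N + 1 : ℕ) : ℝ) * EE D.s D.f i) := by
  rw [EE, Finset.mul_sum, Real.rpow_sum_of_pos D.B_pos]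

lemma le_prod_X (k i : ℕ) : D.B ^ (((k * D.N + 1 : ℕ) : ℝ) * EE D.s D.f i) ≤
    ∏ j ∈ Finset.range i, (D.X k j : ℝ) := by
  rw [← prod_pow]
  exact Finset.prod_le_prod (fun j _ => by have := D.B_pos; positivity) fun j _ => D.le_X k j

lemma prod_X_le (k i : ℕ) : ∏ j ∈ Finset.range i, (D.X k j : ℝ) ≤
    2 ^ i * D.B ^ (((k * D.N + 1 : ℕ) : ℝ) * EE D.s D.f i) := by
  rw [← prod_pow]
  calc _ ≤ ∏ j ∈ Finset.range i, (2 * D.B ^ (((k * D.N + 1 : ℕ) : ℝ) * ee D.s D.f j)) :=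
        Finset.prod_le_prod (fun j _ => by positivity) fun j _ => D.X_le k j
    _ = _ := by rw [Finset.prod_mul_distrib]; simp

/-- Allowed digits in a special block. -/
noncomputable def dset (k : ℕ) (i : ℕ) : Finset ℕ :=
  if i < D.m then Finset.Ico (D.X k i) (2 * D.X k i) else {1}

/-- Total mass. -/
noncomputable def Z : ℝ := ∑ w ∈ D.W, D.B ^ (-(D.N : ℝ) * D.f) * (contQ D.N w : ℝ) ^ (-(2 * D.s))

/-- Weights of words in free blocks. -/
noncomputable def wt (w : Fin D.N → ℕ) : ℝ :=
  D.B ^ (-(D.N : ℝ) * D.f) * (contQ D.N w : ℝ) ^ (-(2 * D.s)) / D.Z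

open Classical in
/-- Allowed words. -/
def S (k : ℕ) : Set (Fin D.N → ℕ) :=
  if D.spec k then {w | ∀ i : Fin D.N, w i ∈ D.dset k i} else {w | w ∈ D.W}

open Classical in
/-- Weights of words. -/
noncomputable def pw (k : ℕ) (w : Fin D.N → ℕ) : ℝ :=
  if D.spec k then ∏ i ∈ Finset.range D.m, (D.X k i : ℝ)⁻¹ else D.wt w

/-- The space of block sequences. -/
abbrev Om : Type := ℕ → Fin D.N → ℕ

/-- Digits. -/
def dig (σ : D.Om) (p : ℕ) : ℕ := σ (p / D.N) ⟨p % D.N, Nat.mod_lt _ D.N_pos⟩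

/-- Good sequences. -/
def G : Set D.Om := {σ | ∀ k, σ k ∈ D.S k}

lemma dig_block (σ : D.Om) (k : ℕ) (i : Fin D.N) : D.dig σ (k * D.N + i) = σ k i := by
  unfold dig
  have hN := D.N_pos
  have h1 : (k * D.N + i) / D.N = k := by
    rw [mul_comm, Nat.mul_add_div hN, Nat.div_eq_of_lt i.2, add_zero]
  have h2 : (k * D.N + i) % D.N = i := by
    rw [mul_comm, Nat.mul_add_mod, Nat.mod_eq_of_lt i.2]
  simp only [h1, h2]

lemma S_spec {k : ℕ} (h : D.spec k) : D.S k = {w | ∀ i : Fin D.N, w i ∈ D.dset k i} := by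
  unfold S; rw [if_pos h]

lemma S_free {k : ℕ} (h : ¬ D.spec k) : D.S k = {w | w ∈ D.W} := by
  unfold S; rw [if_neg h]

lemma dset_pos {k i d : ℕ} (h : d ∈ D.dset k i) : 1 ≤ d := by
  unfold dset at h
  split_ifs at h
  · have := D.two_le_X k i
    rw [Finset.mem_Ico] at h; omega
  · rw [Finset.mem_singleton] at h; omega

lemma S_pos {k : ℕ} {w : Fin D.N → ℕ} (h : w ∈ D.S k) (i : Fin D.N) : 1 ≤ w i := by
  by_cases hk : D.spec k
  · rw [D.S_spec hk] at h
    exact D.dset_pos (h i)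
  · rw [D.S_free hk] at h
    exact D.hWpos w h i

lemma G_pos {σ : D.Om} (h : σ ∈ D.G) : Pos (D.dig σ) := fun _ => D.S_pos (h _) _

lemma Z_ge : 8 ≤ D.Z := D.hZ

lemma contQ_block (σ : D.Om) (k : ℕ) :
    contQ D.N (σ k) = Q D.N (fun i => D.dig σ (k * D.N + i)) := by
  rw [← contQ_eq_Q]
  congr 1
  funext i
  exact (D.dig_block σ k i).symm

lemma dset_succ_le {k i d : ℕ} (h : d ∈ D.dset k i) :
    d + 1 ≤ 2 * (if i < D.m then D.X k i else 1) := by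
  unfold dset at h
  split_ifs at h ⊢
  · rw [Finset.mem_Ico] at h; omega
  · rw [Finset.mem_singleton] at h; omega

lemma dig_mem {σ : D.Om} (h : σ ∈ D.G) {k i : ℕ} (hk : D.spec k) (hi : i < D.N) :
    D.dig σ (k * D.N + i) ∈ D.dset k i := by
  have h1 := h k
  rw [D.S_spec hk] at h1
  have := h1 ⟨i, hi⟩
  rw [← D.dig_block σ k ⟨i, hi⟩] at this
  exact this

/-- growth of the continuant within a special block -/
lemma Q_spec {σ : D.Om} (h : σ ∈ D.G) {k i : ℕ} (hk : D.spec k) (hi : i ≤ D.N) :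
    (Q (k * D.N + i) (D.dig σ) : ℝ) ≤ Q (k * D.N) (D.dig σ) *
      (2 ^ i * ∏ j ∈ Finset.range i, (if j < D.m then (D.X k j : ℝ) else 1)) := by
  have h1 := Q_le_mul_prod (D.G_pos h) (k * D.N) i
  have h2 : ∏ j ∈ Finset.range i, (D.dig σ (k * D.N + j) + 1) ≤
      ∏ j ∈ Finset.range i, 2 * (if j < D.m then D.X k j else 1) :=
    Finset.prod_le_prod' fun j hj => D.dset_succ_le (D.dig_mem h hk
      (by rw [Finset.mem_range] at hj; omega))
  rw [Finset.prod_mul_distrib, Finset.prod_const, Finset.card_range] at h2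
  have h3 := h1.trans (Nat.mul_le_mul_left _ h2)
  have h4 : (Q (k * D.N + i) (D.dig σ) : ℝ) ≤ ((Q (k * D.N) (D.dig σ) *
      (2 ^ i * ∏ j ∈ Finset.range i, (if j < D.m then D.X k j else 1)) : ℕ) : ℝ) := by
    exact_mod_cast h3
  refine h4.trans (le_of_eq ?_)
  push_cast
  rfl

lemma wt_nonneg (w : Fin D.N → ℕ) : 0 ≤ D.wt w := by
  have := D.B_pos
  have := D.Z_ge
  unfold wt; positivity

lemma pw_nonneg (k : ℕ) (w : Fin D.N → ℕ) : 0 ≤ D.pw k w := by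
  unfold pw
  split_ifs
  · positivity
  · exact D.wt_nonneg w

lemma prod_ite (k : ℕ) : ∏ j ∈ Finset.range D.N, (if j < D.m then (D.X k j : ℝ) else 1) =
    ∏ j ∈ Finset.range D.m, (D.X k j : ℝ) := by
  rw [Finset.prod_ite, Finset.prod_const_one, mul_one]
  congr 1
  ext j
  have := D.hmN
  simp only [Finset.mem_filter, Finset.mem_range]
  omega

lemma ratio {σ : D.Om} (h : σ ∈ D.G) (k : ℕ) :
    (∏ j ∈ Finset.range k, D.pw j (σ j)) * (Q (k * D.N) (D.dig σ) : ℝ) ^ (2 * D.s) ≤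
      D.E k * D.B ^ (-((k * D.N : ℕ) : ℝ) * D.f) := by
  have hB0 := D.B_pos
  have hs0 := D.s_pos
  have hpos := D.G_pos h
  induction k with
  | zero => simp [E, Q_zero]
  | succ k ih =>
    have hE0 : 0 < D.E k := by linarith [D.E_gt k]
    set A := ∏ j ∈ Finset.range k, D.pw j (σ j) with hA
    have hA0 : 0 ≤ A := Finset.prod_nonneg fun j _ => D.pw_nonneg _ _
    have hp0 := D.pw_nonneg k (σ k)
    have e : D.B ^ (-(((k + 1) * D.N : ℕ) : ℝ) * D.f) =
        D.B ^ (-((k * D.N : ℕ) : ℝ) * D.f) * D.B ^ (-(D.N : ℝ) * D.f) := by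
      rw [← Real.rpow_add hB0]; congr 1; push_cast; ring
    have e' : (k + 1) * D.N = k * D.N + D.N := by ring
    set q := (Q (k * D.N) (D.dig σ) : ℝ) with hq
    have hq0 : 0 < q := by
      have := Q_pos hpos (k * D.N)
      rw [hq]; exact_mod_cast this
    rw [Finset.prod_range_succ, e]
    by_cases hk : D.spec k
    · rw [D.E_succ_spec hk]
      have h1 := D.Q_spec h hk le_rfl
      rw [D.prod_ite, ← e'] at h1
      set Y := ∏ j ∈ Finset.range D.m, (D.X k j : ℝ) with hY
      have hY0 : 0 < Y := Finset.prod_pos fun j _ => D.X_pos k j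
      have hYle := D.prod_X_le k D.m
      rw [D.hE, mul_one] at hYle
      have hpw : D.pw k (σ k) = Y⁻¹ := by
        unfold pw; rw [if_pos hk, hY, Finset.prod_inv_distrib]
      have h2 : (Q ((k + 1) * D.N) (D.dig σ) : ℝ) ^ (2 * D.s) ≤
          q ^ (2 * D.s) * (4 ^ D.N * (Y * Y ^ (2 * D.s - 1))) := by
        calc _ ≤ (q * (2 ^ D.N * Y)) ^ (2 * D.s) :=
              Real.rpow_le_rpow (Nat.cast_nonneg _) h1 (by linarith)
          _ = q ^ (2 * D.s) * ((2 ^ D.N) ^ (2 * D.s) * Y ^ (2 * D.s)) := by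
              rw [Real.mul_rpow hq0.le (by positivity), Real.mul_rpow (by positivity) hY0.le]
          _ ≤ q ^ (2 * D.s) * (4 ^ D.N * (Y * Y ^ (2 * D.s - 1))) := by
              have e5 : Y ^ (2 * D.s) = Y * Y ^ (2 * D.s - 1) := by
                conv_rhs => rw [← Real.rpow_one Y, ← Real.rpow_mul hY0.le, ← Real.rpow_add hY0]
                congr 1; ring
              have e6 : ((2 : ℝ) ^ D.N) ^ (2 * D.s) ≤ 4 ^ D.N := by
                calc ((2 : ℝ) ^ D.N) ^ (2 * D.s) ≤ ((2 : ℝ) ^ D.N) ^ (2 : ℝ) :=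
                      Real.rpow_le_rpow_of_exponent_le (one_le_pow₀ (by norm_num))
                        (by linarith [D.hs1])
                  _ = 4 ^ D.N := by
                      rw [show (2 : ℝ) = ((2 : ℕ) : ℝ) by norm_num, Real.rpow_natCast, ← pow_mul,
                        mul_comm, pow_mul]; norm_num
              rw [e5]; gcongr
      have h3 : Y ^ (2 * D.s - 1) ≤
          2 ^ D.m * D.B * D.B ^ (((k * D.N : ℕ) : ℝ) * (2 * D.s - 1)) := by
        calc Y ^ (2 * D.s - 1) ≤
            (2 ^ D.m * D.B ^ (((k * D.N + 1 : ℕ) : ℝ))) ^ (2 * D.s - 1) :=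
              Real.rpow_le_rpow hY0.le hYle (by linarith [D.hs])
          _ = (2 ^ D.m) ^ (2 * D.s - 1) * (D.B ^ (2 * D.s - 1) *
              D.B ^ (((k * D.N : ℕ) : ℝ) * (2 * D.s - 1))) := by
              rw [Real.mul_rpow (by positivity) (by positivity), ← Real.rpow_mul hB0.le,
                ← Real.rpow_add hB0]
              congr 2; push_cast; ring
          _ ≤ 2 ^ D.m * (D.B * D.B ^ (((k * D.N : ℕ) : ℝ) * (2 * D.s - 1))) := by
              gcongr
              · calc ((2 : ℝ) ^ D.m) ^ (2 * D.s - 1) ≤ ((2 : ℝ) ^ D.m) ^ (1 : ℝ) :=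
                    Real.rpow_le_rpow_of_exponent_le (one_le_pow₀ (by norm_num))
                        (by linarith [D.hs1])
                  _ = _ := Real.rpow_one _
              · calc D.B ^ (2 * D.s - 1) ≤ D.B ^ (1 : ℝ) :=
                    Real.rpow_le_rpow_of_exponent_le D.hB.le (by linarith [D.hs1])
                  _ = _ := Real.rpow_one _
          _ = _ := by ring
      have e2 : D.B ^ ((D.N : ℝ) * D.f) * D.B ^ (-(D.N : ℝ) * D.f) = 1 := by
        rw [← Real.rpow_add hB0]; simp
      rw [hpw]
      calc A * Y⁻¹ * (Q ((k + 1) * D.N) (D.dig σ) : ℝ) ^ (2 * D.s)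
          ≤ A * Y⁻¹ * (q ^ (2 * D.s) * (4 ^ D.N * (Y *
            (2 ^ D.m * D.B * D.B ^ (((k * D.N : ℕ) : ℝ) * (2 * D.s - 1)))))) := by
            gcongr
            refine h2.trans ?_
            gcongr
        _ = (A * q ^ (2 * D.s)) * (D.C1 * D.B ^ (((k * D.N : ℕ) : ℝ) * (2 * D.s - 1))) := by
            unfold C1; field_simp
        _ ≤ (D.E k * D.B ^ (-((k * D.N : ℕ) : ℝ) * D.f)) *
            (D.C1 * D.B ^ (((k * D.N : ℕ) : ℝ) * (2 * D.s - 1))) := by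
            have : 0 ≤ D.C1 := by linarith [D.two_le_C1]
            gcongr
        _ = (D.E k * D.B ^ (-((k * D.N : ℕ) : ℝ) * D.f)) *
            (D.C1 * D.B ^ (((k * D.N : ℕ) : ℝ) * (2 * D.s - 1))) *
            (D.B ^ ((D.N : ℝ) * D.f) * D.B ^ (-(D.N : ℝ) * D.f)) := by rw [e2, mul_one]
        _ = _ := by ring
    · rw [D.E_succ_free hk]
      have h1 := (Q_add_le_two hpos (k * D.N) D.N).1
      rw [← e', ← D.contQ_block] at h1
      have hpw : D.pw k (σ k) = D.wt (σ k) := by unfold pw; rw [if_neg hk]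
      set r := (contQ D.N (σ k) : ℝ) with hr
      have hr0 : 0 < r := by
        have := Q_pos (a := fun i => D.dig σ (k * D.N + i)) (fun i => hpos _) D.N
        rw [← D.contQ_block] at this
        rw [hr]; exact_mod_cast this
      have h1' : (Q ((k + 1) * D.N) (D.dig σ) : ℝ) ≤ 2 * q * r := by
        rw [hq, hr]; exact_mod_cast h1
      have h2 : (Q ((k + 1) * D.N) (D.dig σ) : ℝ) ^ (2 * D.s) ≤
          4 * q ^ (2 * D.s) * r ^ (2 * D.s) := by
        calc _ ≤ (2 * q * r) ^ (2 * D.s) :=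
              Real.rpow_le_rpow (Nat.cast_nonneg _) h1' (by linarith)
          _ = 2 ^ (2 * D.s) * q ^ (2 * D.s) * r ^ (2 * D.s) := by
              rw [Real.mul_rpow (by positivity) hr0.le, Real.mul_rpow (by norm_num) hq0.le]
          _ ≤ _ := by
              gcongr
              calc (2 : ℝ) ^ (2 * D.s) ≤ 2 ^ (2 : ℝ) :=
                    Real.rpow_le_rpow_of_exponent_le (by norm_num) (by linarith [D.hs1])
                _ = 4 := by norm_num
      have hZ := D.Z_ge
      have hw : D.wt (σ k) * (4 * r ^ (2 * D.s)) ≤ D.B ^ (-(D.N : ℝ) * D.f) / 2 := by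
        unfold wt
        rw [← hr, Real.rpow_neg hr0.le]
        have hrp : 0 < r ^ (2 * D.s) := by positivity
        have hBp : 0 < D.B ^ (-(D.N : ℝ) * D.f) := by positivity
        calc _ = D.B ^ (-(D.N : ℝ) * D.f) * (4 / D.Z) := by field_simp
          _ ≤ D.B ^ (-(D.N : ℝ) * D.f) * (1 / 2) := by
            have : 4 / D.Z ≤ 1 / 2 := by
              rw [div_le_div_iff₀ (by linarith) (by norm_num)]; linarith
            exact mul_le_mul_of_nonneg_left this hBp.le
          _ = _ := by ring
      rw [hpw] at hp0 ⊢
      calc A * D.wt (σ k) * (Q ((k + 1) * D.N) (D.dig σ) : ℝ) ^ (2 * D.s)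
          ≤ A * D.wt (σ k) * (4 * q ^ (2 * D.s) * r ^ (2 * D.s)) := by gcongr
        _ = (A * q ^ (2 * D.s)) * (D.wt (σ k) * (4 * r ^ (2 * D.s))) := by ring
        _ ≤ (D.E k * D.B ^ (-((k * D.N : ℕ) : ℝ) * D.f)) * (D.B ^ (-(D.N : ℝ) * D.f) / 2) := by
            gcongr
        _ = _ := by ring

end Dat
end NAC

namespace NAC
namespace Dat
variable (D : Dat)

/-- One-digit uniform measure. -/
noncomputable def U (k i : ℕ) : Measure ℕ := ProbabilityTheory.uniformOn (D.dset k i : Set ℕ)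

lemma dset_nonempty (k i : ℕ) : (D.dset k i).Nonempty := by
  unfold dset
  split_ifs
  · rw [Finset.nonempty_Ico]
    have := D.two_le_X k i; omega
  · exact Finset.singleton_nonempty _

instance U_prob (k i : ℕ) : IsProbabilityMeasure (D.U k i) :=
  ProbabilityTheory.isProbabilityMeasure_uniformOn (Finset.finite_toSet _)
    (by exact_mod_cast D.dset_nonempty k i)

lemma card_dset {k i : ℕ} (hi : i < D.m) : (D.dset k i).card = D.X k i := by
  unfold dset
  rw [if_pos hi, Nat.card_Ico]; omega

lemma U_le {k i : ℕ} (hi : i < D.m) (A : Finset ℕ) :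
    D.U k i A ≤ ENNReal.ofReal (A.card / D.X k i) := by
  unfold U
  rw [ProbabilityTheory.uniformOn_apply_finset, D.card_dset hi,
    ENNReal.ofReal_div_of_pos (D.X_pos k i), ENNReal.ofReal_natCast, ENNReal.ofReal_natCast]
  gcongr
  exact Finset.inter_subset_right

open Classical in
/-- Block measures. -/
noncomputable def P (k : ℕ) : Measure (Fin D.N → ℕ) :=
  if D.spec k then Measure.pi (fun i : Fin D.N => D.U k i)
  else ∑ w ∈ D.W, ENNReal.ofReal (D.wt w) • Measure.dirac w

lemma P_spec {k : ℕ} (h : D.spec k) : D.P k = Measure.pi (fun i : Fin D.N => D.U k i) := by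
  unfold P; rw [if_pos h]

lemma P_free {k : ℕ} (h : ¬ D.spec k) :
    D.P k = ∑ w ∈ D.W, ENNReal.ofReal (D.wt w) • Measure.dirac w := by
  unfold P; rw [if_neg h]

lemma sum_wt : ∑ w ∈ D.W, D.wt w = 1 := by
  have := D.Z_ge
  unfold wt
  rw [← Finset.sum_div]
  exact div_self (by change D.Z ≠ 0; linarith)

instance P_prob (k : ℕ) : IsProbabilityMeasure (D.P k) := by
  by_cases h : D.spec k
  · rw [D.P_spec h]; infer_instance
  · refine ⟨?_⟩
    rw [D.P_free h]
    simp only [Measure.finsetSum_apply, Measure.smul_apply, measure_univ, smul_eq_mul, mul_one]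
    rw [← ENNReal.ofReal_sum_of_nonneg fun w _ => D.wt_nonneg w, D.sum_wt, ENNReal.ofReal_one]

lemma meas_word (A : Set (Fin D.N → ℕ)) : MeasurableSet A := A.to_countable.measurableSet

lemma P_S (k : ℕ) : D.P k (D.S k)ᶜ = 0 := by
  by_cases h : D.spec k
  · rw [prob_compl_eq_zero_iff (D.meas_word _), D.P_spec h, D.S_spec h]
    have : {w : Fin D.N → ℕ | ∀ i : Fin D.N, w i ∈ D.dset k i} =
        Set.pi univ (fun i : Fin D.N => (D.dset k i : Set ℕ)) := by
      ext w; simp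
    rw [this, Measure.pi_pi]
    apply Finset.prod_eq_one
    intro i _
    exact ProbabilityTheory.uniformOn_self (Finset.finite_toSet _)
      (by exact_mod_cast D.dset_nonempty k i)
  · rw [D.P_free h, D.S_free h]
    simp only [Measure.finsetSum_apply, Measure.smul_apply, smul_eq_mul]
    apply Finset.sum_eq_zero
    intro w hw
    rw [Measure.dirac_apply' _ (D.meas_word _)]
    simp [hw]

/-- Boxes in special blocks. -/
lemma P_box {k i : ℕ} (h : D.spec k) (hi : i ≤ D.m) (c : ℕ → ℕ) (A : Finset ℕ) :
    D.P k {w | ∀ j : Fin D.N, ((j : ℕ) < i → w j = c j) ∧ ((j : ℕ) = i → i < D.m → w j ∈ A)} ≤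
      ENNReal.ofReal (∏ j ∈ Finset.range i, (D.X k j : ℝ)⁻¹) *
      (if i < D.m then ENNReal.ofReal (min 1 (A.card / D.X k i)) else 1) := by
  rw [D.P_spec h]
  let T : ℕ → Set ℕ := fun j =>
    if j < i then (({c j} : Finset ℕ) : Set ℕ) else if j = i ∧ i < D.m then (A : Set ℕ) else univ
  have e : {w : Fin D.N → ℕ | ∀ j : Fin D.N, ((j : ℕ) < i → w j = c j) ∧
      ((j : ℕ) = i → i < D.m → w j ∈ A)} = Set.pi univ (fun j : Fin D.N => T j) := by
    ext w
    simp only [Set.mem_pi, mem_univ, true_imp_iff]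
    refine forall_congr' fun j => ?_
    simp only [T]
    split_ifs with h1 h2
    · simp [h1, h1.ne]
    · simp [h2]
    · simp [h1]; omega
  rw [e, Measure.pi_pi, ← Finset.prod_range (fun j => D.U k j (T j))]
  have h1 : ∏ j ∈ Finset.range D.N, D.U k j (T j) =
      (∏ j ∈ Finset.range i, D.U k j (T j)) * ∏ j ∈ Finset.Ico i D.N, D.U k j (T j) := by
    rw [Finset.prod_range_mul_prod_Ico _ (hi.trans D.hmN)]
  rw [h1]
  refine mul_le_mul' ?_ ?_
  · rw [ENNReal.ofReal_prod_of_nonneg (fun j _ => by positivity)]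
    refine Finset.prod_le_prod' fun j hj => ?_
    rw [Finset.mem_range] at hj
    simp only [T, if_pos hj]
    refine (D.U_le (by omega) _).trans ?_
    simp
  · split_ifs with hh
    · have : i ∈ Finset.Ico i D.N := by
        rw [Finset.mem_Ico]; have := D.hmN; omega
      rw [← Finset.mul_prod_erase _ _ this]
      have h2 : ∏ j ∈ (Finset.Ico i D.N).erase i, D.U k j (T j) ≤ 1 :=
        Finset.prod_le_one' fun j _ => prob_le_one
      refine (mul_le_mul_right h2 _).trans ?_
      rw [mul_one, ENNReal.ofReal_min, le_min_iff, ENNReal.ofReal_one]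
      refine ⟨prob_le_one, ?_⟩
      simp only [T, lt_irrefl, if_false, hh, and_self, if_true]
      exact D.U_le hh A
    · exact Finset.prod_le_one' fun j _ => prob_le_one

lemma P_sing {k : ℕ} (w : Fin D.N → ℕ) : D.P k {w} ≤ ENNReal.ofReal (D.pw k w) := by
  by_cases h : D.spec k
  · have := D.P_box h le_rfl (fun j => if hj : j < D.N then w ⟨j, hj⟩ else 0) ∅
    rw [if_neg (lt_irrefl _), mul_one] at this
    unfold pw
    rw [if_pos h]
    refine (measure_mono ?_).trans this
    rintro v rfl
    simp
  · rw [D.P_free h]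
    unfold pw
    rw [if_neg h]
    simp only [Measure.finsetSum_apply, Measure.smul_apply, smul_eq_mul]
    have : ∀ v ∈ D.W, ENNReal.ofReal (D.wt v) * (Measure.dirac v {w}) =
        if v = w then ENNReal.ofReal (D.wt w) else 0 := by
      intro v _
      rw [Measure.dirac_apply' _ (D.meas_word _)]
      by_cases hv : v = w
      · simp [hv]
      · simp [hv]
    rw [Finset.sum_congr rfl this, Finset.sum_ite_eq']
    split_ifs
    · exact le_rfl
    · exact bot_le

/-- The measure. -/
noncomputable def mu : Measure D.Om := Measure.infinitePi D.P

instance : IsProbabilityMeasure D.mu := by unfold mu; infer_instance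

lemma mu_G : D.mu D.Gᶜ = 0 := by
  have : ∀ᵐ σ ∂D.mu, ∀ k, σ k ∈ D.S k := by
    rw [ae_all_iff]
    intro k
    have h1 := measurePreserving_eval_infinitePi D.P k
    exact h1.quasiMeasurePreserving.ae (p := fun w => w ∈ D.S k) (D.P_S k)
  exact this

lemma mu_cyl (τ : D.Om) (k : ℕ) (A : Set (Fin D.N → ℕ)) :
    D.mu {σ | (∀ j < k, σ j = τ j) ∧ σ k ∈ A} ≤
      ENNReal.ofReal (∏ j ∈ Finset.range k, D.pw j (τ j)) * D.P k A := by
  let T : ℕ → Set (Fin D.N → ℕ) := fun j => if j < k then {τ j} else A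
  have e : {σ : D.Om | (∀ j < k, σ j = τ j) ∧ σ k ∈ A} =
      Set.pi (Finset.range (k + 1) : Set ℕ) T := by
    ext σ
    simp only [Set.mem_pi, Finset.coe_range, mem_Iio, T]
    constructor
    · rintro ⟨h1, h2⟩ j hj
      split_ifs with h
      · exact h1 j h
      · have : j = k := by omega
        rw [this]; exact h2
    · intro h
      refine ⟨fun j hj => ?_, ?_⟩
      · have := h j (by omega)
        rwa [if_pos hj] at this
      · have := h k (by omega)
        rwa [if_neg (lt_irrefl _)] at this
  unfold mu
  rw [e, Measure.infinitePi_pi _ (fun i _ => D.meas_word _), Finset.prod_range_succ,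
    ENNReal.ofReal_prod_of_nonneg (fun j _ => D.pw_nonneg _ _)]
  refine mul_le_mul' (Finset.prod_le_prod' fun j hj => ?_) (by simp [T])
  rw [Finset.mem_range] at hj
  simp only [T, if_pos hj]
  exact D.P_sing _

/-- Coding map. -/
noncomputable def code (σ : D.Om) : ℝ := cfv (D.dig σ)

lemma measurable_code : Measurable D.code := by
  refine measurable_cfv.comp (measurable_pi_iff.2 fun p => ?_)
  unfold dig
  fun_prop

end Dat
end NAC

namespace NAC

lemma free_real {A q qn L Mr a b C s : ℝ} (hs : 1 / 2 < s) (hs1 : s < 1) (hq : 0 < q) (hqn : 0 < qn)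
    (hL : 1 ≤ L) (hC : 0 ≤ C) (h1 : A * q ^ (2 * s) ≤ C) (h2 : qn ≤ q * L) (ha : 1 ≤ a)
    (hab : a + 1 ≤ b) (hb : b ≤ Mr) :
    A ≤ C * (L * Mr) ^ 2 * ((b - a) / (qn ^ 2 * (a * b))) ^ s := by
  have hMr : 1 ≤ Mr := by linarith
  have ha0 : 0 < a := by linarith
  have hb0 : 0 < b := by linarith
  have haM : a ≤ Mr := by linarith
  have hLM : 1 ≤ L * Mr := one_le_mul_of_one_le_of_one_le hL hMr
  have hqp : 0 < q ^ (2 * s) := by positivity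
  have h3 : 1 / (q * (L * Mr)) ^ 2 ≤ (b - a) / (qn ^ 2 * (a * b)) := by
    apply div_le_div₀ (by linarith) (by linarith) (by positivity)
    calc qn ^ 2 * (a * b) ≤ (q * L) ^ 2 * (Mr * Mr) := by gcongr
      _ = _ := by ring
  have h4 : (1 / (q * (L * Mr)) ^ 2) ^ s = 1 / (q ^ (2 * s) * (L * Mr) ^ (2 * s)) := by
    rw [Real.div_rpow (by norm_num) (by positivity), Real.one_rpow, mul_pow,
      Real.mul_rpow (by positivity) (by positivity), ← Real.rpow_natCast, ← Real.rpow_natCast,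
      ← Real.rpow_mul hq.le, ← Real.rpow_mul (by positivity)]
    norm_num
  have h5 : (L * Mr) ^ (2 * s) ≤ (L * Mr) ^ 2 := by
    rw [← Real.rpow_natCast]
    exact Real.rpow_le_rpow_of_exponent_le hLM (by push_cast; linarith)
  have h5p : 0 < (L * Mr) ^ (2 * s) := by positivity
  calc A ≤ C / q ^ (2 * s) := by rw [le_div_iff₀ hqp]; exact h1
    _ = C * (L * Mr) ^ (2 * s) * (1 / (q ^ (2 * s) * (L * Mr) ^ (2 * s))) := by field_simp
    _ ≤ C * (L * Mr) ^ 2 * (1 / (q ^ (2 * s) * (L * Mr) ^ (2 * s))) := by gcongr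
    _ ≤ _ := by
      rw [← h4]
      gcongr

lemma spec_real {A q qn Y x a b K T s : ℝ} {i : ℕ} (hs : 1 / 2 < s) (hs1 : s < 1) (hq : 0 < q)
    (hqn : 0 < qn) (hA : 0 ≤ A) (hY : 0 < Y) (hx : 0 < x) (hT : 0 < T) (hK : 0 ≤ K)
    (h1 : A * q ^ (2 * s) ≤ T⁻¹) (h2 : qn ≤ q * (2 ^ i * Y)) (ha : 1 ≤ a) (hab : a + 1 ≤ b)
    (hb : b ≤ 2 * x) (h3 : Y ^ (2 * s - 1) * x ^ s ≤ K * T) :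
    A * (Y⁻¹ * min 1 ((b - a + 1) / x)) ≤
      8 * K * 4 ^ i * ((b - a) / (qn ^ 2 * (a * b))) ^ s := by
  set d := b - a with hd
  have hd1 : 1 ≤ d := by linarith
  have ha0 : 0 < a := by linarith
  have hb0 : 0 < b := by linarith
  have haM : a ≤ 2 * x := by linarith
  have hqp : 0 < q ^ (2 * s) := by positivity
  have hYp : 0 < Y ^ (2 * s - 1) := by positivity
  have hxp : 0 < x ^ s := by positivity
  have hdp : 0 < d ^ s := by positivity
  have hmin : min 1 ((d + 1) / x) ≤ 2 * d ^ s / x ^ s := by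
    have hy0 : 0 < (d + 1) / x := by positivity
    have e1 : min 1 ((d + 1) / x) ≤ ((d + 1) / x) ^ s := by
      rcases le_total 1 ((d + 1) / x) with h | h
      · rw [min_eq_left h]; exact Real.one_le_rpow h (by linarith)
      · rw [min_eq_right h]
        calc (d + 1) / x = ((d + 1) / x) ^ (1 : ℝ) := (Real.rpow_one _).symm
          _ ≤ _ := Real.rpow_le_rpow_of_exponent_ge hy0 h hs1.le
    have e2 : ((d + 1) / x) ^ s ≤ (2 * d / x) ^ s :=
      Real.rpow_le_rpow hy0.le (by gcongr; linarith) (by linarith)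
    have e3 : (2 * d / x) ^ s = 2 ^ s * d ^ s / x ^ s := by
      rw [Real.div_rpow (by positivity) hx.le, Real.mul_rpow (by norm_num) (by positivity)]
    have e4 : (2 : ℝ) ^ s ≤ 2 := by
      calc (2 : ℝ) ^ s ≤ 2 ^ (1 : ℝ) := Real.rpow_le_rpow_of_exponent_le (by norm_num) hs1.le
        _ = 2 := Real.rpow_one 2
    refine e1.trans (e2.trans ?_)
    rw [e3]
    gcongr
  have hden : (qn ^ 2 * (a * b)) ≤ q ^ 2 * 4 ^ (i + 1) * Y ^ 2 * (x * x) := by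
    calc qn ^ 2 * (a * b) ≤ (q * (2 ^ i * Y)) ^ 2 * ((2 * x) * (2 * x)) := by gcongr
      _ = q ^ 2 * ((2 ^ i) ^ 2 * 4) * Y ^ 2 * (x * x) := by ring
      _ = _ := by
        rw [← pow_mul, mul_comm i 2, pow_mul]; norm_num [pow_succ]
  have hdens : (q ^ 2 * 4 ^ (i + 1) * Y ^ 2 * (x * x)) ^ s ≤
      q ^ (2 * s) * 4 ^ (i + 1) * (Y * Y ^ (2 * s - 1)) * (x ^ s * x ^ s) := by
    rw [Real.mul_rpow (by positivity) (by positivity), Real.mul_rpow (by positivity) (by positivity),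
      Real.mul_rpow (by positivity) (by positivity), Real.mul_rpow hx.le hx.le]
    have e1 : (q ^ 2) ^ s = q ^ (2 * s) := by
      rw [← Real.rpow_natCast, ← Real.rpow_mul hq.le]; norm_num
    have e2 : (Y ^ 2) ^ s = Y * Y ^ (2 * s - 1) := by
      conv_rhs => rw [← Real.rpow_one Y, ← Real.rpow_mul hY.le, ← Real.rpow_add hY]
      rw [← Real.rpow_natCast, ← Real.rpow_mul hY.le]; congr 1; push_cast; ring
    have e3 : ((4 : ℝ) ^ (i + 1)) ^ s ≤ 4 ^ (i + 1) := by
      calc ((4 : ℝ) ^ (i + 1)) ^ s ≤ (4 ^ (i + 1)) ^ (1 : ℝ) :=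
            Real.rpow_le_rpow_of_exponent_le (one_le_pow₀ (by norm_num)) hs1.le
        _ = _ := Real.rpow_one _
    rw [e1, e2]
    gcongr
  have hR : d ^ s / (q ^ (2 * s) * 4 ^ (i + 1) * (Y * Y ^ (2 * s - 1)) * (x ^ s * x ^ s)) ≤
      (d / (qn ^ 2 * (a * b))) ^ s := by
    have hqab : 0 < qn ^ 2 * (a * b) := by
      have : 0 < b := by linarith
      positivity
    rw [Real.div_rpow (by linarith) hqab.le]
    gcongr
    exact (Real.rpow_le_rpow hqab.le hden (by linarith)).trans hdens
  have hA' : A ≤ T⁻¹ / q ^ (2 * s) := by rw [le_div_iff₀ hqp]; exact h1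
  have hKT : 1 ≤ K * T / (Y ^ (2 * s - 1) * x ^ s) := by
    rw [le_div_iff₀ (by positivity), one_mul]; exact h3
  calc A * (Y⁻¹ * min 1 ((d + 1) / x))
      ≤ (T⁻¹ / q ^ (2 * s)) * (Y⁻¹ * (2 * d ^ s / x ^ s)) := by
        gcongr
    _ = (T⁻¹ / q ^ (2 * s)) * (Y⁻¹ * (2 * d ^ s / x ^ s)) * 1 := by ring
    _ ≤ (T⁻¹ / q ^ (2 * s)) * (Y⁻¹ * (2 * d ^ s / x ^ s)) *
        (K * T / (Y ^ (2 * s - 1) * x ^ s)) := by gcongr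
    _ = 8 * K * 4 ^ i *
        (d ^ s / (q ^ (2 * s) * 4 ^ (i + 1) * (Y * Y ^ (2 * s - 1)) * (x ^ s * x ^ s))) := by
        rw [pow_succ]; field_simp; ring
    _ ≤ _ := by gcongr

namespace Dat
variable (D : Dat)

lemma agree {σ τ : D.Om} {k i : ℕ} (h : ∀ p < k * D.N + i, D.dig σ p = D.dig τ p) :
    ∀ j < k, σ j = τ j := by
  intro j hj
  funext l
  rw [← D.dig_block σ j l, ← D.dig_block τ j l]
  apply h
  have h1 : (j + 1) * D.N ≤ k * D.N := Nat.mul_le_mul_right _ hj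
  have h2 := l.2
  rw [add_mul, one_mul] at h1
  omega

lemma dig_free {σ : D.Om} (h : σ ∈ D.G) {k i : ℕ} (hk : ¬ D.spec k) (hi : i < D.N) :
    D.dig σ (k * D.N + i) ≤ D.M := by
  have h1 := h k
  rw [D.S_free hk] at h1
  have := D.hWM _ h1 ⟨i, hi⟩
  rwa [← D.dig_block σ k ⟨i, hi⟩] at this

lemma split (p : ℕ) : ∃ k i, i < D.N ∧ p = k * D.N + i :=
  ⟨p / D.N, p % D.N, Nat.mod_lt _ D.N_pos, by rw [mul_comm]; exact (Nat.div_add_mod _ _).symm⟩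

lemma dset_lo {k i d : ℕ} (hi : i < D.m) (h : d ∈ D.dset k i) : D.X k i ≤ d ∧ d < 2 * D.X k i := by
  unfold dset at h
  rwa [if_pos hi, Finset.mem_Ico] at h

lemma dset_one {k i d : ℕ} (hi : ¬ i < D.m) (h : d ∈ D.dset k i) : d = 1 := by
  unfold dset at h
  rwa [if_neg hi, Finset.mem_singleton] at h

lemma next_dig (p : ℕ) : (∀ σ ∈ D.G, 2 ≤ D.dig σ p) ∨ (∀ σ ∈ D.G, D.dig σ p ≤ D.M) := by
  obtain ⟨k, i, hi, rfl⟩ := D.split p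
  by_cases hk : D.spec k
  · by_cases him : i < D.m
    · left
      intro σ hσ
      exact (D.two_le_X k i).trans (D.dset_lo him (D.dig_mem hσ hk hi)).1
    · right
      intro σ hσ
      rw [D.dset_one him (D.dig_mem hσ hk hi)]
      exact D.hM
  · right
    exact fun σ hσ => D.dig_free hσ hk hi

lemma dig_bdd (p : ℕ) : ∃ L, ∀ σ ∈ D.G, D.dig σ p ≤ L := by
  obtain ⟨k, i, hi, rfl⟩ := D.split p
  by_cases hk : D.spec k
  · by_cases him : i < D.m
    · exact ⟨2 * D.X k i, fun σ hσ => (D.dset_lo him (D.dig_mem hσ hk hi)).2.le⟩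
    · exact ⟨1, fun σ hσ => (D.dset_one him (D.dig_mem hσ hk hi)).le⟩
  · exact ⟨D.M, fun σ hσ => D.dig_free hσ hk hi⟩

/-- constant -/
noncomputable def C2 : ℝ := D.C1 * ((D.M + 1) ^ D.N * D.M) ^ 2
/-- constant -/
noncomputable def C3 : ℝ := 8 * (2 ^ (D.N + 1) * D.B ^ D.f) * 4 ^ D.N

lemma C2_nonneg : 0 ≤ D.C2 := by
  have := D.two_le_C1
  have : 0 ≤ D.C1 := by linarith
  unfold C2; positivity
lemma C3_nonneg : 0 ≤ D.C3 := by
  have := D.B_pos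
  unfold C3; positivity

lemma Q_free {σ : D.Om} (h : σ ∈ D.G) {k i : ℕ} (hk : ¬ D.spec k) (hi : i < D.N) :
    (Q (k * D.N + i) (D.dig σ) : ℝ) ≤ Q (k * D.N) (D.dig σ) * (D.M + 1) ^ D.N := by
  have h1 := Q_le_mul_prod (D.G_pos h) (k * D.N) i
  have h2 : ∏ j ∈ Finset.range i, (D.dig σ (k * D.N + j) + 1) ≤
      ∏ j ∈ Finset.range i, (D.M + 1) :=
    Finset.prod_le_prod' fun j hj => by
      have := D.dig_free h hk (i := j) (by rw [Finset.mem_range] at hj; omega)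
      omega
  rw [Finset.prod_const, Finset.card_range] at h2
  have h3 := h2.trans (Nat.pow_le_pow_right (Nat.succ_pos D.M) hi.le)
  have h4 := h1.trans (Nat.mul_le_mul_left _ h3)
  exact_mod_cast h4

lemma exp_bound {k i : ℕ} (hi : i < D.m) :
    (∏ j ∈ Finset.range i, (D.X k j : ℝ)) ^ (2 * D.s - 1) * (D.X k i : ℝ) ^ D.s ≤
      (2 ^ (D.N + 1) * D.B ^ D.f) * D.B ^ (((k * D.N : ℕ) : ℝ) * D.f) := by
  have hB0 := D.B_pos
  set n1 : ℝ := ((k * D.N + 1 : ℕ) : ℝ) with hn1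
  have hs := D.hs
  have hs1 := D.hs1
  have h1 : (∏ j ∈ Finset.range i, (D.X k j : ℝ)) ^ (2 * D.s - 1) ≤
      2 ^ i * D.B ^ (n1 * EE D.s D.f i * (2 * D.s - 1)) := by
    calc _ ≤ (2 ^ i * D.B ^ (n1 * EE D.s D.f i)) ^ (2 * D.s - 1) :=
          Real.rpow_le_rpow (by positivity) (D.prod_X_le k i) (by linarith)
      _ = (2 ^ i) ^ (2 * D.s - 1) * D.B ^ (n1 * EE D.s D.f i * (2 * D.s - 1)) := by
          rw [Real.mul_rpow (by positivity) (by positivity), ← Real.rpow_mul hB0.le]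
      _ ≤ _ := by
          gcongr
          calc ((2 : ℝ) ^ i) ^ (2 * D.s - 1) ≤ (2 ^ i) ^ (1 : ℝ) :=
                Real.rpow_le_rpow_of_exponent_le (one_le_pow₀ (by norm_num)) (by linarith)
            _ = _ := Real.rpow_one _
  have h2 : (D.X k i : ℝ) ^ D.s ≤ 2 * D.B ^ (n1 * ee D.s D.f i * D.s) := by
    calc _ ≤ (2 * D.B ^ (n1 * ee D.s D.f i)) ^ D.s :=
          Real.rpow_le_rpow (by positivity) (D.X_le k i) (by linarith)
      _ = 2 ^ D.s * D.B ^ (n1 * ee D.s D.f i * D.s) := by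
          rw [Real.mul_rpow (by positivity) (by positivity), ← Real.rpow_mul hB0.le]
      _ ≤ _ := by
          gcongr
          calc (2 : ℝ) ^ D.s ≤ 2 ^ (1 : ℝ) :=
                Real.rpow_le_rpow_of_exponent_le (by norm_num) (by linarith)
            _ = _ := Real.rpow_one _
  have h3 : D.B ^ (n1 * EE D.s D.f i * (2 * D.s - 1)) * D.B ^ (n1 * ee D.s D.f i * D.s) =
      D.B ^ D.f * D.B ^ (((k * D.N : ℕ) : ℝ) * D.f) := by
    rw [← Real.rpow_add hB0, ← Real.rpow_add hB0]
    congr 1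
    have hr := EE_rec D.s_pos D.f i
    rw [EE_succ] at hr
    have hn : n1 = ((k * D.N : ℕ) : ℝ) + 1 := by rw [hn1]; push_cast; ring
    rw [hn]
    linear_combination (((k * D.N : ℕ) : ℝ) + 1) * hr
  have h4 : (2 : ℝ) ^ (i + 1) ≤ 2 ^ (D.N + 1) :=
    pow_le_pow_right₀ (by norm_num) (by have := D.hmN; omega)
  calc _ ≤ (2 ^ i * D.B ^ (n1 * EE D.s D.f i * (2 * D.s - 1))) *
        (2 * D.B ^ (n1 * ee D.s D.f i * D.s)) := by gcongr
    _ = 2 ^ (i + 1) * (D.B ^ (n1 * EE D.s D.f i * (2 * D.s - 1)) *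
        D.B ^ (n1 * ee D.s D.f i * D.s)) := by ring
    _ ≤ 2 ^ (D.N + 1) * (D.B ^ D.f * D.B ^ (((k * D.N : ℕ) : ℝ) * D.f)) := by rw [h3]; gcongr
    _ = _ := by ring

lemma pre {V : Set D.Om} {k i : ℕ} (hV : V ⊆ D.G) (hi : i < D.N) {α β : D.Om} (hα : α ∈ V)
    (hβ : β ∈ V) (hagree : ∀ σ ∈ V, ∀ p < k * D.N + i, D.dig σ p = D.dig α p)
    (hlo : ∀ σ ∈ V, D.dig α (k * D.N + i) ≤ D.dig σ (k * D.N + i))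
    (hhi : ∀ σ ∈ V, D.dig σ (k * D.N + i) ≤ D.dig β (k * D.N + i))
    (hlt : D.dig α (k * D.N + i) < D.dig β (k * D.N + i)) :
    D.mu V ≤ ENNReal.ofReal ((D.C2 + D.C3) *
      (((D.dig β (k * D.N + i) : ℝ) - D.dig α (k * D.N + i)) /
        ((Q (k * D.N + i) (D.dig α) : ℝ) ^ 2 *
          (D.dig α (k * D.N + i) * D.dig β (k * D.N + i)))) ^ D.s) := by
  have hαG := hV hα
  have hβG := hV hβ
  have hpos := D.G_pos hαG
  have hB0 := D.B_pos
  set n := k * D.N + i with hn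
  set a := D.dig α n with ha
  set b := D.dig β n with hb
  have ha1 : 1 ≤ a := hpos n
  have hratio := D.ratio hαG k
  set A := ∏ j ∈ Finset.range k, D.pw j (α j) with hA
  have hA0 : 0 ≤ A := Finset.prod_nonneg fun j _ => D.pw_nonneg _ _
  have hq1 := Q_pos hpos (k * D.N)
  have hqn1 := Q_pos hpos n
  have hq0 : (0 : ℝ) < Q (k * D.N) (D.dig α) := by exact_mod_cast hq1
  have hqn0 : (0 : ℝ) < Q n (D.dig α) := by exact_mod_cast hqn1
  have ha1' : (1 : ℝ) ≤ a := by exact_mod_cast ha1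
  have hab' : (a : ℝ) + 1 ≤ b := by exact_mod_cast hlt
  have hr0 : 0 ≤ (((b : ℝ) - a) / ((Q n (D.dig α) : ℝ) ^ 2 * (a * b))) ^ D.s := by
    have : (0 : ℝ) ≤ b - a := by linarith
    positivity
  by_cases hk : D.spec k
  · have him : i < D.m := by
      by_contra him
      have h1 := D.dset_one him (D.dig_mem hαG hk hi)
      have h2 := D.dset_one him (D.dig_mem hβG hk hi)
      rw [← hn] at h1 h2
      omega
    have hsub : V ⊆ {σ | (∀ j < k, σ j = α j) ∧ σ k ∈ {w : Fin D.N → ℕ | ∀ j : Fin D.N,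
        ((j : ℕ) < i → w j = D.dig α (k * D.N + j)) ∧
        ((j : ℕ) = i → i < D.m → w j ∈ Finset.Icc a b)}} := by
      intro σ hσ
      refine ⟨D.agree (hagree σ hσ), fun j => ⟨fun hj => ?_, fun hj _ => ?_⟩⟩
      · rw [← D.dig_block σ k j]
        exact hagree σ hσ _ (by omega)
      · rw [← D.dig_block σ k j, hj, Finset.mem_Icc]
        exact ⟨hlo σ hσ, hhi σ hσ⟩
    have hb2 := (D.dset_lo him (D.dig_mem hβG hk hi)).2
    rw [← hn, ← hb] at hb2
    have hQ := D.Q_spec hαG hk hi.le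
    have hprod : ∏ j ∈ Finset.range i, (if j < D.m then (D.X k j : ℝ) else 1) =
        ∏ j ∈ Finset.range i, (D.X k j : ℝ) := by
      refine Finset.prod_congr rfl fun j hj => ?_
      rw [Finset.mem_range] at hj
      rw [if_pos (by omega)]
    rw [hprod, ← hn] at hQ
    have hcard : ((Finset.Icc a b).card : ℝ) = (b : ℝ) - a + 1 := by
      rw [Nat.card_Icc, Nat.cast_sub (by omega)]; push_cast; ring
    have hT : A * (Q (k * D.N) (D.dig α) : ℝ) ^ (2 * D.s) ≤
        (D.B ^ (((k * D.N : ℕ) : ℝ) * D.f))⁻¹ := by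
      rw [← Real.rpow_neg hB0.le, ← neg_mul]
      refine hratio.trans ?_
      have : D.E k ≤ 1 := hk
      calc _ ≤ 1 * D.B ^ (-((k * D.N : ℕ) : ℝ) * D.f) := by gcongr
        _ = _ := one_mul _
    have key := spec_real (x := (D.X k i : ℝ)) (Y := ∏ j ∈ Finset.range i, (D.X k j : ℝ))
      (i := i) (b := (b : ℝ)) D.hs D.hs1 hq0 hqn0 hA0
      (Finset.prod_pos fun j _ => D.X_pos k j) (D.X_pos k i) (by positivity) (by positivity) hT hQ
      ha1' hab' (by exact_mod_cast hb2.le) (D.exp_bound him)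
    refine (measure_mono hsub).trans ((D.mu_cyl α k _).trans ?_)
    refine (mul_le_mul_right (D.P_box hk him.le (fun j => D.dig α (k * D.N + j))
      (Finset.Icc a b)) _).trans ?_
    rw [if_pos him, ← ENNReal.ofReal_mul (by positivity), ← ENNReal.ofReal_mul hA0, hcard,
      Finset.prod_inv_distrib]
    refine ENNReal.ofReal_le_ofReal (key.trans ?_)
    gcongr
    have h4 : (4 : ℝ) ^ i ≤ 4 ^ D.N := pow_le_pow_right₀ (by norm_num) hi.le
    calc _ ≤ D.C3 := by unfold C3; gcongr
      _ ≤ _ := by linarith [D.C2_nonneg]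
  · have hsub : V ⊆ {σ | (∀ j < k, σ j = α j) ∧ σ k ∈ (univ : Set (Fin D.N → ℕ))} :=
      fun σ hσ => ⟨D.agree (hagree σ hσ), mem_univ _⟩
    have hbM := D.dig_free hβG hk hi
    have hL : (1 : ℝ) ≤ ((D.M : ℝ) + 1) ^ D.N :=
      one_le_pow₀ (by have : (0:ℝ) ≤ D.M := Nat.cast_nonneg _; linarith)
    have key := free_real (b := (b : ℝ)) D.hs D.hs1 hq0 hqn0 hL
      (by linarith [D.two_le_C1]) (hratio.trans (D.E_bound k)) (D.Q_free hαG hk hi) ha1' hab'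
      (Mr := (D.M : ℝ)) (by exact_mod_cast hbM)
    refine (measure_mono hsub).trans ((D.mu_cyl α k _).trans ?_)
    rw [measure_univ, mul_one]
    refine ENNReal.ofReal_le_ofReal (key.trans ?_)
    gcongr
    change D.C2 ≤ _
    linarith [D.C3_nonneg]

end Dat
end NAC

namespace NAC
namespace Dat
variable (D : Dat)

/-- constant -/
noncomputable def C4 : ℝ := (D.C2 + D.C3) * (16 * (D.M + 1)) ^ D.s

lemma mu_point (τ : D.Om) (hτ : τ ∈ D.G) {V : Set D.Om}
    (h : ∀ σ ∈ V, ∀ p, D.dig σ p = D.dig τ p) : D.mu V = 0 := by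
  have hpos := D.G_pos hτ
  by_contra hne
  have hfin : D.mu V ≠ ⊤ := measure_ne_top _ _
  have hm0 : 0 < (D.mu V).toReal := ENNReal.toReal_pos hne hfin
  have hC := D.two_le_C1
  have hb : ∀ k : ℕ, (D.mu V).toReal ^ 2 ≤ 2 * D.C1 ^ 2 * (1 / 2) ^ k := by
    intro k
    have hsub : V ⊆ {σ | (∀ j < k, σ j = τ j) ∧ σ k ∈ (univ : Set (Fin D.N → ℕ))} :=
      fun σ hσ => ⟨D.agree (i := 0) (fun p _ => h σ hσ p), mem_univ _⟩
    have h1 := (measure_mono hsub).trans (D.mu_cyl τ k _)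
    rw [measure_univ, mul_one] at h1
    set A := ∏ j ∈ Finset.range k, D.pw j (τ j) with hA
    have hA0 : 0 ≤ A := Finset.prod_nonneg fun j _ => D.pw_nonneg _ _
    have h2 : (D.mu V).toReal ≤ A := ENNReal.toReal_le_of_le_ofReal hA0 h1
    have h3 := (D.ratio hτ k).trans (D.E_bound k)
    rw [← hA] at h3
    set q := (Q (k * D.N) (D.dig τ) : ℝ) with hq
    have hq1 : 1 ≤ q := by
      have := Q_pos hpos (k * D.N)
      rw [hq]; exact_mod_cast this
    have h4 : q ≤ q ^ (2 * D.s) := by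
      calc q = q ^ (1 : ℝ) := (Real.rpow_one _).symm
        _ ≤ _ := Real.rpow_le_rpow_of_exponent_le hq1 (by linarith [D.hs])
    have h5 : A * q ≤ D.C1 := (mul_le_mul_of_nonneg_left h4 hA0).trans h3
    have h6 : (2 : ℝ) ^ (k * D.N) ≤ 2 * q ^ 2 := by
      have := (two_pow_le_Q hpos (k * D.N)).1
      rw [hq]; exact_mod_cast this
    have h7 : (2 : ℝ) ^ k ≤ 2 ^ (k * D.N) :=
      pow_le_pow_right₀ (by norm_num) (Nat.le_mul_of_pos_right _ D.N_pos)
    have h8 : (A * q) ^ 2 ≤ D.C1 ^ 2 := by gcongr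
    have h9 : A ^ 2 * 2 ^ k ≤ 2 * D.C1 ^ 2 := by
      calc A ^ 2 * 2 ^ k ≤ A ^ 2 * (2 * q ^ 2) := by gcongr; linarith
        _ = 2 * (A * q) ^ 2 := by ring
        _ ≤ _ := by linarith
    calc (D.mu V).toReal ^ 2 ≤ A ^ 2 := by gcongr
      _ = A ^ 2 * 2 ^ k * (1 / 2) ^ k := by
          rw [mul_assoc, ← mul_pow]; norm_num
      _ ≤ _ := by gcongr
  have ht := (tendsto_pow_atTop_nhds_zero_of_lt_one (r := (1 / 2 : ℝ)) (by norm_num)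
      (by norm_num)).const_mul (2 * D.C1 ^ 2)
  rw [mul_zero] at ht
  have := ge_of_tendsto' ht hb
  nlinarith

lemma ball (U : Set ℝ) :
    D.mu (D.G ∩ D.code ⁻¹' U) ≤ ENNReal.ofReal D.C4 * Metric.ediam U ^ D.s := by
  classical
  set V := D.G ∩ D.code ⁻¹' U with hV
  have hVG : V ⊆ D.G := inter_subset_left
  have hC23 : 0 ≤ D.C2 + D.C3 := add_nonneg D.C2_nonneg D.C3_nonneg
  by_cases hdis : ∃ p, ∃ σ ∈ V, ∃ τ ∈ V, D.dig σ p ≠ D.dig τ p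
  swap
  · push Not at hdis
    rcases V.eq_empty_or_nonempty with he | ⟨τ, hτ⟩
    · rw [he, measure_empty]; exact bot_le
    · rw [D.mu_point τ (hVG hτ) (fun σ hσ p => hdis p σ hσ τ hτ)]; exact bot_le
  have hmin := fun p => @Nat.find_min _ _ hdis p
  obtain ⟨σ1, hσ1, σ2, hσ2, hne⟩ := Nat.find_spec hdis
  set n := Nat.find hdis with hn
  -- extreme digits
  have hex1 : ∃ d, ∃ σ ∈ V, D.dig σ n = d := ⟨_, σ1, hσ1, rfl⟩
  obtain ⟨α, hα, hαd⟩ := Nat.find_spec hex1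
  have hαmin : ∀ σ ∈ V, D.dig α n ≤ D.dig σ n := by
    intro σ hσ
    rw [hαd]
    exact Nat.find_min' hex1 ⟨σ, hσ, rfl⟩
  obtain ⟨L, hL⟩ := D.dig_bdd n
  have hbdd : ∀ d, (∃ σ ∈ V, D.dig σ n = d) → d ≤ L := by
    rintro d ⟨σ, hσ, rfl⟩
    exact hL σ (hVG hσ)
  obtain ⟨β, hβ, hβd⟩ := Nat.findGreatest_spec (P := fun d => ∃ σ ∈ V, D.dig σ n = d)
    (hbdd _ ⟨σ1, hσ1, rfl⟩) ⟨σ1, hσ1, rfl⟩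
  have hβmax : ∀ σ ∈ V, D.dig σ n ≤ D.dig β n := by
    intro σ hσ
    rw [hβd]
    exact Nat.le_findGreatest (hbdd _ ⟨σ, hσ, rfl⟩) ⟨σ, hσ, rfl⟩
  have hlt : D.dig α n < D.dig β n := by
    have a1 := hαmin σ1 hσ1
    have a2 := hαmin σ2 hσ2
    have b1 := hβmax σ1 hσ1
    have b2 := hβmax σ2 hσ2
    omega
  have hagree : ∀ σ ∈ V, ∀ p < n, D.dig σ p = D.dig α p := by
    intro σ hσ p hp
    by_contra hcon
    exact hmin p hp ⟨σ, hσ, α, hα, hcon⟩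
  have hnext : 2 ≤ D.dig α (n + 1) ∨ D.dig β (n + 1) ≤ D.M := by
    rcases D.next_dig (n + 1) with h | h
    · exact Or.inl (h α (hVG hα))
    · exact Or.inr (h β (hVG hβ))
  have hposα := D.G_pos (hVG hα)
  have hgap := gap hposα (D.G_pos (hVG hβ)) n
    (fun p hp => (hagree β hβ p hp).symm) hlt D.M D.hM hnext
  have hpre : D.mu V ≤ ENNReal.ofReal ((D.C2 + D.C3) *
      (((D.dig β n : ℝ) - D.dig α n) /
        ((Q n (D.dig α) : ℝ) ^ 2 * (D.dig α n * D.dig β n))) ^ D.s) := by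
    obtain ⟨k, i, hi, hki⟩ := D.split n
    rw [hki] at hαmin hβmax hlt hagree ⊢
    exact D.pre hVG hi hα hβ hagree hαmin hβmax hlt
  refine hpre.trans ?_
  have ha0 : (0 : ℝ) < D.dig α n := by exact_mod_cast hposα n
  have hab : (D.dig α n : ℝ) < D.dig β n := by exact_mod_cast hlt
  have hb0 : (0 : ℝ) < D.dig β n := ha0.trans hab
  have hq0 : (0 : ℝ) < Q n (D.dig α) := by exact_mod_cast Q_pos hposα n
  have hM0 : (0 : ℝ) < 16 * (D.M + 1) := by positivity
  have h1 : ((D.dig β n : ℝ) - D.dig α n) /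
        ((Q n (D.dig α) : ℝ) ^ 2 * (D.dig α n * D.dig β n)) ≤
        (16 * (D.M + 1)) * |D.code α - D.code β| := by
    calc _ = (16 * (D.M + 1)) * (((D.dig β n : ℝ) - D.dig α n) /
        (16 * (D.M + 1) * (Q n (D.dig α) : ℝ) ^ 2 * (D.dig α n * D.dig β n))) := by
          field_simp
      _ ≤ _ := mul_le_mul_of_nonneg_left hgap hM0.le
  have hd : ENNReal.ofReal |D.code α - D.code β| ≤ Metric.ediam U := by
    rw [← Real.dist_eq, ← edist_dist]
    exact Metric.edist_le_ediam_of_mem hα.2 hβ.2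
  calc _ ≤ ENNReal.ofReal ((D.C2 + D.C3) *
        ((16 * (D.M + 1)) * |D.code α - D.code β|) ^ D.s) := by
        apply ENNReal.ofReal_le_ofReal
        have : (0 : ℝ) ≤ D.dig β n - D.dig α n := by linarith
        have hs := D.s_pos
        gcongr
    _ = ENNReal.ofReal (D.C4 * |D.code α - D.code β| ^ D.s) := by
        rw [Real.mul_rpow hM0.le (abs_nonneg _), C4, mul_assoc]
    _ = ENNReal.ofReal D.C4 * ENNReal.ofReal |D.code α - D.code β| ^ D.s := by
        rw [ENNReal.ofReal_mul (by unfold C4; positivity),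
          ENNReal.ofReal_rpow_of_nonneg (abs_nonneg _) D.s_pos.le]
    _ ≤ _ := by
        gcongr
        exact D.s_pos.le

lemma lower {F : Set ℝ} (hF : ∀ σ ∈ D.G, D.code σ ∈ F) : ENNReal.ofReal D.s ≤ dimH F := by
  have hs := D.s_pos
  set C : ℝ≥0∞ := ENNReal.ofReal (D.C4 + 1) with hC
  have hC4 : 0 ≤ D.C4 := by
    have hC23 : 0 ≤ D.C2 + D.C3 := add_nonneg D.C2_nonneg D.C3_nonneg
    unfold C4; positivity
  have hC0 : C ≠ 0 := by
    rw [hC, Ne, ENNReal.ofReal_eq_zero]; linarith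
  have hCt : C ≠ ⊤ := ENNReal.ofReal_ne_top
  have key : C⁻¹ • D.mu.map D.code ≤ Measure.hausdorffMeasure D.s := by
    refine Measure.le_hausdorffMeasure D.s _ 1 one_pos fun U _ => ?_
    refine (measure_mono (subset_closure (s := U))).trans ?_
    rw [Measure.smul_apply, Measure.map_apply D.measurable_code isClosed_closure.measurableSet,
      smul_eq_mul]
    have h1 : D.mu (D.code ⁻¹' closure U) ≤ D.mu (D.G ∩ D.code ⁻¹' closure U) := by
      calc _ ≤ D.mu ((D.G ∩ D.code ⁻¹' closure U) ∪ D.Gᶜ) := by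
            apply measure_mono
            intro σ hσ
            by_cases h : σ ∈ D.G
            · exact Or.inl ⟨h, hσ⟩
            · exact Or.inr h
        _ ≤ _ := (measure_union_le _ _).trans (by rw [D.mu_G, add_zero])
    have h2 := h1.trans (D.ball (closure U))
    rw [Metric.ediam_closure] at h2
    calc C⁻¹ * D.mu (D.code ⁻¹' closure U) ≤ C⁻¹ * (C * Metric.ediam U ^ D.s) := by
          gcongr
          refine h2.trans ?_
          gcongr
          exact ENNReal.ofReal_le_ofReal (by linarith)
      _ = Metric.ediam U ^ D.s := by
          rw [← mul_assoc, ENNReal.inv_mul_cancel hC0 hCt, one_mul]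
  have hne : Measure.hausdorffMeasure ((⟨D.s, hs.le⟩ : ℝ≥0) : ℝ) F ≠ 0 := by
    intro h0
    have h1 := key F
    have h0' : Measure.hausdorffMeasure D.s F = 0 := h0
    rw [h0', Measure.smul_apply, smul_eq_mul] at h1
    have h2 : D.mu D.G ≤ D.mu.map D.code F :=
      (measure_mono (fun σ hσ => hF σ hσ)).trans
        (Measure.le_map_apply D.measurable_code.aemeasurable F)
    have h3 : D.mu D.G = 1 := by
      have := D.mu_G
      have h4 : (1 : ℝ≥0∞) ≤ D.mu D.G + D.mu D.Gᶜ := by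
        rw [← measure_univ (μ := D.mu), ← union_compl_self D.G]
        exact measure_union_le _ _
      rw [this, add_zero] at h4
      exact le_antisymm prob_le_one h4
    rw [h3] at h2
    have h5 : C⁻¹ * D.mu.map D.code F = 0 := le_antisymm h1 bot_le
    rw [mul_eq_zero] at h5
    rcases h5 with h5 | h5
    · exact ENNReal.inv_ne_zero.2 hCt h5
    · rw [h5] at h2; exact absurd h2 (by simp)
  have := le_dimH_of_hausdorffMeasure_ne_zero hne
  rwa [ENNReal.ofReal, Real.toNNReal_of_nonneg hs.le]

/-! Membership -/

lemma code_inf {σ : D.Om} (h : σ ∈ D.G) :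
    {n : ℕ | D.B ^ n ≤ ∏ i ∈ Finset.range D.m, (pq (D.code σ) (n + i) : ℝ)}.Infinite := by
  apply Set.infinite_of_forall_exists_gt
  intro a
  obtain ⟨k, hka, hk⟩ := D.exists_spec a
  refine ⟨k * D.N + 1, ?_, ?_⟩
  · change D.B ^ (k * D.N + 1) ≤ _
    have h1 := D.le_prod_X k D.m
    rw [D.hE, mul_one, Real.rpow_natCast] at h1
    refine h1.trans (Finset.prod_le_prod (fun j _ => Nat.cast_nonneg _) fun j hj => ?_)
    rw [Finset.mem_range] at hj
    have e : k * D.N + 1 + j = (k * D.N + j) + 1 := by ring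
    rw [e]
    unfold code
    rw [pq_cfv (D.G_pos h)]
    exact_mod_cast (D.dset_lo hj (D.dig_mem h hk (hj.trans_le D.hmN))).1
  · have := Nat.le_mul_of_pos_right k D.N_pos
    omega

lemma EE_pred : EE D.s D.f (D.m - 1) = 1 - ee D.s D.f (D.m - 1) := by
  have h := EE_succ D.s D.f (D.m - 1)
  rw [Nat.sub_add_cancel (by have := D.hm; omega), D.hE] at h
  linarith

lemma pow_mono {x y e : ℝ} (hxy : x ≤ y) (he : 0 ≤ e) : D.B ^ (x * e) ≤ D.B ^ (y * e) :=
  Real.rpow_le_rpow_of_exponent_le D.hB.le (mul_le_mul_of_nonneg_right hxy he)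

lemma spec_dig_le {σ : D.Om} (h : σ ∈ D.G) {k j : ℕ} (hk : D.spec k) (hj : j < D.N) {y : ℝ}
    (hy : ((k * D.N + 1 : ℕ) : ℝ) ≤ y) :
    (D.dig σ (k * D.N + j) : ℝ) ≤ 4 * D.M * D.B ^ (y * (if j < D.m then ee D.s D.f j else 0)) := by
  have hM : (1 : ℝ) ≤ D.M := by exact_mod_cast D.hM
  have hB0 := D.B_pos
  have hm := D.dig_mem h hk hj
  split_ifs with hjm
  · have h1 := (D.dset_lo hjm hm).2.le
    have h2 : (D.dig σ (k * D.N + j) : ℝ) ≤ 2 * D.X k j := by exact_mod_cast h1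
    have h3 := D.X_le k j
    have h4 := D.pow_mono hy (D.ee_pos' j).le
    calc _ ≤ 4 * 1 * D.B ^ (y * ee D.s D.f j) := by linarith
      _ ≤ _ := by gcongr
  · rw [D.dset_one hjm hm]
    simp; linarith

lemma window {σ : D.Om} (h : σ ∈ D.G) (ν : ℕ) : ∃ γ : ℕ → ℝ,
    (∀ i < D.m - 1, (D.dig σ (ν + i) : ℝ) ≤ 4 * D.M * D.B ^ (((ν : ℝ) + D.N + 1) * γ i)) ∧
    ∑ i ∈ Finset.range (D.m - 1), γ i ≤ 1 - ee D.s D.f (D.m - 1) := by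
  have hM : (1 : ℝ) ≤ D.M := by exact_mod_cast D.hM
  have hB0 := D.B_pos
  have hm2 := D.hm
  have hmN := D.hmN
  have hfree : ∀ x : ℕ, x ≤ D.M → (x : ℝ) ≤ 4 * D.M * D.B ^ (((ν : ℝ) + D.N + 1) * 0) := by
    intro x hx
    have : (x : ℝ) ≤ D.M := by exact_mod_cast hx
    simp; linarith
  rw [← D.EE_pred]
  obtain ⟨k, i0, hi0, rfl⟩ := D.split ν
  by_cases hk : D.spec k
  · refine ⟨fun i => if i0 + i < D.m then ee D.s D.f (i0 + i) else 0, fun i hi => ?_, ?_⟩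
    · by_cases hlt : i0 + i < D.N
      · have := D.spec_dig_le h hk hlt (y := ((k * D.N + i0 : ℕ) : ℝ) + D.N + 1) (by
          push_cast
          have : (0 : ℝ) ≤ i0 := Nat.cast_nonneg _
          have : (0 : ℝ) ≤ D.N := Nat.cast_nonneg _
          linarith)
        rw [add_assoc (k * D.N)]
        exact this
      · have hnm : ¬ i0 + i < D.m := by omega
        simp only [if_neg hnm]
        apply hfree
        have e : k * D.N + i0 + i = (k + 1) * D.N + (i0 + i - D.N) := by
          rw [add_mul, one_mul]; omega
        rw [e]
        exact D.dig_free h (D.not_adj hk) (by omega)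
    · unfold EE
      refine Finset.sum_le_sum fun i _ => ?_
      split_ifs
      · exact ee_anti D.hs D.hs1 D.hf (by omega)
      · exact (D.ee_pos' i).le
  · by_cases hk1 : D.spec (k + 1)
    · refine ⟨fun i => if D.N - i0 ≤ i then ee D.s D.f (i - (D.N - i0)) else 0, fun i hi => ?_, ?_⟩
      · by_cases hle : D.N - i0 ≤ i
        · have := D.spec_dig_le h hk1 (j := i - (D.N - i0)) (by omega)
            (y := ((k * D.N + i0 : ℕ) : ℝ) + D.N + 1) (by
            push_cast
            have : (0 : ℝ) ≤ i0 := Nat.cast_nonneg _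
            linarith)
          rw [if_pos (by omega)] at this
          simp only [if_pos hle]
          have e : k * D.N + i0 + i = (k + 1) * D.N + (i - (D.N - i0)) := by
            rw [add_mul, one_mul]; omega
          rw [e]
          exact this
        · simp only [if_neg hle]
          apply hfree
          rw [add_assoc]
          exact D.dig_free h hk (by omega)
      · unfold EE
        rw [← Finset.sum_filter]
        have e : (Finset.range (D.m - 1)).filter (fun i => D.N - i0 ≤ i) =
            Finset.Ico (D.N - i0) (D.m - 1) := by
          ext i; simp; omega
        rw [e, Finset.sum_Ico_eq_sum_range]
        simp only [Nat.add_sub_cancel_left]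
        refine Finset.sum_le_sum_of_subset_of_nonneg ?_ fun i _ _ => (D.ee_pos' i).le
        intro i; simp; omega
    · refine ⟨fun _ => 0, fun i hi => ?_, ?_⟩
      · apply hfree
        by_cases hlt : i0 + i < D.N
        · rw [add_assoc]
          exact D.dig_free h hk hlt
        · have e : k * D.N + i0 + i = (k + 1) * D.N + (i0 + i - D.N) := by
            rw [add_mul, one_mul]; omega
          rw [e]
          exact D.dig_free h hk1 (by omega)
      · simp only [Finset.sum_const_zero]
        exact EE_nonneg D.s_pos D.hs1 D.hf _

lemma code_ev {σ : D.Om} (h : σ ∈ D.G) {B₂ : ℝ} (hB₂ : D.B ^ (1 - ee D.s D.f (D.m - 1)) < B₂) :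
    ∀ᶠ n : ℕ in atTop,
      ∏ i ∈ Finset.range (D.m - 1), (pq (D.code σ) (n + 1 + i) : ℝ) < B₂ ^ n := by
  have hB0 := D.B_pos
  have hM : (1 : ℝ) ≤ D.M := by exact_mod_cast D.hM
  set θ := 1 - ee D.s D.f (D.m - 1) with hθ
  have hb0 : 0 < D.B ^ θ := by positivity
  have hB₂0 : 0 < B₂ := hb0.trans hB₂
  set K := (4 * (D.M : ℝ)) ^ (D.m - 1) * D.B ^ (((D.N : ℝ) + 1) * θ) with hK
  have hbound : ∀ ν : ℕ, ∏ i ∈ Finset.range (D.m - 1), (pq (D.code σ) (ν + 1 + i) : ℝ) ≤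
      K * (D.B ^ θ) ^ ν := by
    intro ν
    obtain ⟨γ, h1, h2⟩ := D.window h ν
    calc _ ≤ ∏ i ∈ Finset.range (D.m - 1),
          (4 * (D.M : ℝ) * D.B ^ (((ν : ℝ) + D.N + 1) * γ i)) := by
          refine Finset.prod_le_prod (fun j _ => Nat.cast_nonneg _) fun j hj => ?_
          rw [Finset.mem_range] at hj
          have e : ν + 1 + j = (ν + j) + 1 := by ring
          rw [e]
          unfold code
          rw [pq_cfv (D.G_pos h)]
          exact h1 j hj
      _ = (4 * (D.M : ℝ)) ^ (D.m - 1) *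
          D.B ^ (((ν : ℝ) + D.N + 1) * ∑ i ∈ Finset.range (D.m - 1), γ i) := by
          rw [Finset.prod_mul_distrib, Finset.prod_const, Finset.card_range, Finset.mul_sum,
            Real.rpow_sum_of_pos hB0]
      _ ≤ (4 * (D.M : ℝ)) ^ (D.m - 1) * D.B ^ (((ν : ℝ) + D.N + 1) * θ) := by
          gcongr
          exact D.hB.le
      _ = _ := by
          rw [hK, ← Real.rpow_natCast (D.B ^ θ), ← Real.rpow_mul hB0.le, mul_assoc,
            ← Real.rpow_add hB0]
          congr 2; ring
  have ht := (tendsto_pow_atTop_nhds_zero_of_lt_one (r := D.B ^ θ / B₂) (by positivity)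
      (by rw [div_lt_one hB₂0]; exact hB₂)).const_mul K
  rw [mul_zero] at ht
  filter_upwards [ht.eventually_lt_const one_pos] with ν hν
  refine (hbound ν).trans_lt ?_
  rw [div_pow, mul_div_assoc', div_lt_one (by positivity)] at hν
  exact hν

end Dat

lemma lower_main {m : ℕ} (hm : 2 ≤ m) {B B₂ s : ℝ} (hB : 1 < B) (hs : 1 / 2 < s) (hs1 : s < 1)
    (hB₂ : B ^ (1 - ee s (fIter s (m - 1)) (m - 1)) < B₂)
    (hlim : ¬ atTop.limsup (fun n : ℕ => (((n : ℝ)⁻¹ : ℝ) : EReal) *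
      ENNReal.log (SS B s (fIter s (m - 1)) n)) ≤ 0) :
    ENNReal.ofReal s ≤ dimH {x : ℝ | x ∈ Set.Ioo (0 : ℝ) 1 ∧ Irrational x ∧
      {n : ℕ | B ^ n ≤ ∏ i ∈ Finset.range m, (pq x (n + i) : ℝ)}.Infinite ∧
      (∀ᶠ n : ℕ in Filter.atTop,
        ∏ i ∈ Finset.range (m - 1), (pq x (n + 1 + i) : ℝ) < B₂ ^ n)} := by
  classical
  have hs0 : 0 < s := by linarith
  set f := fIter s (m - 1) with hf
  obtain ⟨N, hN, hlt⟩ := SS_lower hlim 8 m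
  unfold SS at hlt
  rw [ENNReal.tsum_eq_iSup_sum, lt_iSup_iff] at hlt
  obtain ⟨W0, hW0⟩ := hlt
  have hB0 : 0 < B := by linarith
  rw [← ENNReal.ofReal_sum_of_nonneg (fun w _ => by positivity)] at hW0
  have hW8 := ((ENNReal.ofReal_lt_ofReal_iff_of_nonneg (by norm_num)).1 hW0).le
  let ι : (Fin N → ℕ+) → (Fin N → ℕ) := fun w i => (w i : ℕ)
  have hι : Function.Injective ι := by
    intro v w h
    funext i
    exact PNat.coe_injective (congrFun h i)
  let D : Dat :=
    { B := B, s := s, f := f, m := m, N := N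
      M := (W0.image ι).sup (fun w => Finset.univ.sup w) + 1
      W := W0.image ι
      hB := hB, hs := hs, hs1 := hs1, hm := hm, hmN := hN
      hf := fIter_pos hs0 hs1 _
      hf2 := two_s_le hs0 hs1 _
      hE := by
        have := EE_fIter hs0 hs1 (m - 1)
        rwa [Nat.sub_add_cancel (by omega)] at this
      hM := by omega
      hWpos := by
        intro w hw i
        obtain ⟨v, -, rfl⟩ := Finset.mem_image.1 hw
        exact (v i).pos
      hWM := by
        intro w hw i
        have h1 : w i ≤ Finset.univ.sup w := Finset.le_sup (Finset.mem_univ i)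
        have h2 : Finset.univ.sup w ≤ (W0.image ι).sup (fun w => Finset.univ.sup w) :=
          Finset.le_sup (f := fun w : Fin N → ℕ => Finset.univ.sup w) hw
        omega
      hZ := by
        rw [Finset.sum_image (fun v _ w _ h => hι h)]
        exact hW8 }
  exact D.lower fun σ hσ => ⟨⟨cfv_pos (D.G_pos hσ), cfv_lt_one (D.G_pos hσ)⟩,
    irrational_cfv (D.G_pos hσ), D.code_inf hσ, D.code_ev hσ hB₂⟩

end NAC

namespace NAC

lemma tExpM_set_bdd (B : ℝ) (m : ℕ) : BddBelow {s : ℝ | 0 ≤ s ∧ s ≤ 1 ∧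
    Filter.atTop.limsup (fun n : ℕ =>
      (((n : ℝ)⁻¹ : ℝ) : EReal) * ENNReal.log (∑' a : Fin n → ℕ+,
        ENNReal.ofReal (B ^ (-(n : ℝ) * fIter s (m - 1)) *
          ((contQ n fun i => (a i : ℕ)) : ℝ) ^ (-(2 * s))))) ≤ 0} :=
  ⟨0, fun _ h => h.1⟩

lemma tExpM_set_nonempty {B : ℝ} {m : ℕ} (h : 1 / 2 < tExpM B m) :
    Set.Nonempty {s : ℝ | 0 ≤ s ∧ s ≤ 1 ∧
    Filter.atTop.limsup (fun n : ℕ =>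
      (((n : ℝ)⁻¹ : ℝ) : EReal) * ENNReal.log (∑' a : Fin n → ℕ+,
        ENNReal.ofReal (B ^ (-(n : ℝ) * fIter s (m - 1)) *
          ((contQ n fun i => (a i : ℕ)) : ℝ) ^ (-(2 * s))))) ≤ 0} := by
  rw [Set.nonempty_iff_ne_empty]
  intro he
  unfold tExpM at h
  rw [he, Real.sInf_empty] at h
  norm_num at h

end NAC

end Helpers

theorem new_application_case_one (m : ℕ) (hm : 2 ≤ m) (B₁ B₂ : ℝ)
    (hB₁ : 1 < B₁) (hB₂ : 1 < B₂)
    (ht : 1 / 2 < tExpM B₁ m ∧ tExpM B₁ m < 1)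
    (hcase : B₁ ^ ((tExpM B₁ m ^ m - tExpM B₁ m * (1 - tExpM B₁ m) ^ (m - 1)) /
      (tExpM B₁ m ^ m - (1 - tExpM B₁ m) ^ m)) ≤ B₂) :
    dimH {x : ℝ | x ∈ Set.Ioo (0 : ℝ) 1 ∧ Irrational x ∧
      {n : ℕ | B₁ ^ n ≤ ∏ i ∈ Finset.range m, (pq x (n + i) : ℝ)}.Infinite ∧
      (∀ᶠ n : ℕ in Filter.atTop,
        ∏ i ∈ Finset.range (m - 1), (pq x (n + 1 + i) : ℝ) < B₂ ^ n)} =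
    ENNReal.ofReal (tExpM B₁ m) := by
  obtain ⟨ht1, ht2⟩ := ht
  have hne := NAC.tExpM_set_nonempty ht1
  have hbdd := NAC.tExpM_set_bdd B₁ m
  rw [NAC.theta_eq ht1 ht2 hm] at hcase
  apply le_antisymm
  · apply le_of_forall_gt_imp_ge_of_dense
    intro b hb
    obtain ⟨r, hr1, hr2⟩ := ENNReal.lt_iff_exists_nnreal_btwn.1 hb
    refine le_trans ?_ hr2.le
    have hr : tExpM B₁ m < (r : ℝ) := by
      have h := (ENNReal.ofReal_lt_iff_lt_toReal (by linarith) ENNReal.coe_ne_top).1 hr1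
      simpa using h
    obtain ⟨s, hs, hsr⟩ := exists_lt_of_csInf_lt hne (lt_min hr ht2)
    have hts : tExpM B₁ m ≤ s := csInf_le hbdd hs
    have hsr1 : s < r := lt_of_lt_of_le hsr (min_le_left _ _)
    have hsr2 : s < 1 := lt_of_lt_of_le hsr (min_le_right _ _)
    have hup := NAC.upper (η := r - s) (by omega : 1 ≤ m) hB₁ (by linarith) hsr2
      (by linarith) hs.2.2
    rw [show s + ((r : ℝ) - s) = r by ring] at hup
    apply dimH_le_of_hausdorffMeasure_ne_top
    refine ne_top_of_le_ne_top ENNReal.zero_ne_top (le_trans (measure_mono ?_) hup.le)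
    rintro x ⟨h1, h2, h3, -⟩
    exact ⟨h1, h2, h3⟩
  · apply le_of_forall_lt_imp_le_of_dense
    intro b hb
    obtain ⟨r, hr1, hr2⟩ := ENNReal.lt_iff_exists_nnreal_btwn.1 hb
    have hr : (r : ℝ) < tExpM B₁ m := by
      have h := (ENNReal.lt_ofReal_iff_toReal_lt ENNReal.coe_ne_top).1 hr2
      simpa using h
    obtain ⟨s, hs1, hs2⟩ := exists_between (max_lt hr ht1)
    have hs3 : (r : ℝ) < s := lt_of_le_of_lt (le_max_left _ _) hs1
    have hs4 : 1 / 2 < s := lt_of_le_of_lt (le_max_right _ _) hs1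
    have hlim := notMem_of_lt_csInf hs2 hbdd
    have hrs : (r : ENNReal) ≤ ENNReal.ofReal s := by
      rw [← ENNReal.ofReal_coe_nnreal]
      exact ENNReal.ofReal_le_ofReal hs3.le
    refine le_trans hr1.le (le_trans hrs ?_)
    refine NAC.lower_main hm hB₁ hs4 (by linarith) ?_ ?_
    · refine lt_of_lt_of_le (Real.rpow_lt_rpow_of_exponent_lt hB₁ ?_) hcase
      have := NAC.ee_strict (by linarith : 0 < s) hs2 ht2 (k := m - 1) (by omega)
      linarith
    · intro h
      exact hlim ⟨by linarith, by linarith, h⟩
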